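/- arXiv:2310.17735 — 5 statements merged into one kernel-verified Lean document; each statement's English description precedes it below -/
import Mathlib

section
/- Let X, A, R be finite nonempty sets, H, K complex Hilbert spaces, and U = (U_{a,x}) a block operator isometry over (X,A) with entries in B(H,K). Let ξ = Σ_{x∈X,r∈R} ξ_{x,r} e_x ⊗ e_r ∈ ℂ^X ⊗ ℂ^R be a unit vector, let m ∈ ℕ, λ₁,…,λ_m ≥ 0, and γ_k = Σ_{a∈A,r∈R} γ_{k,a,r} e_a ⊗ e_r ∈ ℂ^A ⊗ ℂ^R be unit vectors, and set P = Σ_{k=1}^m λ_k γ_k γ_k*. Define matrices ρ_k ∈ M_{X,A}(ℂ) by (ρ_k)_{x,a} = √λ_k · Σ_{r∈R} γ_{k,a,r} · conj(ξ_{x,r}), and operators φ_U(ρ_k) = Σ_{x∈X,a∈A} (ρ_k)_{x,a} U_{a,x} ∈ B(H,K). Then: (1) for every unit vector ζ ∈ H, Tr((Γ_{U,ζ} ⊗ id_{M_R})(ξξ*) P) = Σ_{k=1}^m ‖φ_U(ρ_k) ζ‖², where Γ_{U,ζ} : M_X → M_A is the linear map with Γ_{U,ζ}(ε_{x,x'})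 = Σ_{a,a'∈A} ⟨U_{a,x}* U_{a',x'} ζ, ζ⟩ ε_{a,a'} and Γ_{U,ζ} ⊗ id_{M_R} acts on M_X ⊗ M_R = M_{X×R}; and (2) the supremum over all unit vectors ζ ∈ H of Tr((Γ_{U,ζ} ⊗ id_{M_R})(ξξ*) P) equals ‖Σ_{k=1}^m φ_U(ρ_k)* φ_U(ρ_k)‖. -/
open ContinuousLinearMap
open scoped ComplexInnerProductSpace

/-!
Put `v_{a,r} = ∑ x, conj ξ_{x,r} • U_{a,x} ζ ∈ K`. The matrix `(Γ_{U,ζ} ⊗ id)(ξξ*)` is the Gram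
matrix of these vectors, so pairing it with `γγ*` gives `‖∑ γ_{a,r} • v_{a,r}‖²`; for `γ = γ_k` this
is `‖φ_U(ρ_k) ζ‖²` up to the factor `λ_k`. Stacking the `φ_U(ρ_k)` into one column operator
`C : H → K ^ m`, the sum over `k` is `‖C ζ‖²`, whose supremum over unit vectors is
`‖C‖² = ‖C* C‖ = ‖∑ k, φ_U(ρ_k)* φ_U(ρ_k)‖`.
-/

theorem sSup_sphere_norm_sq_eq_norm_sq {𝕜 E F : Type*} [RCLike 𝕜] [NormedAddCommGroup E]
    [NormedSpace 𝕜 E] [SeminormedAddCommGroup F] [NormedSpace 𝕜 F] (T : E →L[𝕜] F) :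
    sSup ((fun ζ => ‖T ζ‖ ^ 2) '' Metric.sphere 0 1) = ‖T‖ ^ 2 := by
  rw [← T.sSup_sphere_eq_norm, sSup_image', sSup_image',
    Real.iSup_pow_of_ne_zero (fun _ => norm_nonneg _) two_ne_zero]

section ColumnOperator

variable {𝕜 ι H K : Type*} [RCLike 𝕜] [NormedAddCommGroup H] [NormedAddCommGroup K]

section NormedSpace

variable [NormedSpace 𝕜 H] [NormedSpace 𝕜 K]

/-- The column operator `ζ ↦ (Φ k ζ)ₖ` into the `ℓ²`-sum of copies of `K`, i.e. the family `Φ`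
stacked into a single operator. -/
noncomputable def columnOperator (Φ : ι → H →L[𝕜] K) : H →L[𝕜] PiLp 2 fun _ : ι => K :=
  (PiLp.continuousLinearEquiv 2 𝕜 fun _ : ι => K).symm ∘L ContinuousLinearMap.pi Φ

theorem columnOperator_apply (Φ : ι → H →L[𝕜] K) (ζ : H) (k : ι) :
    columnOperator Φ ζ k = Φ k ζ :=
  rfl

theorem norm_sq_columnOperator_apply [Fintype ι] (Φ : ι → H →L[𝕜] K) (ζ : H) :
    ‖columnOperator Φ ζ‖ ^ 2 = ∑ k, ‖Φ k ζ‖ ^ 2 := by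
  simp only [PiLp.norm_sq_eq_of_L2, columnOperator_apply]

end NormedSpace

variable [Fintype ι] [InnerProductSpace 𝕜 H] [InnerProductSpace 𝕜 K]
  [CompleteSpace H] [CompleteSpace K]

theorem adjoint_columnOperator_comp_self (Φ : ι → H →L[𝕜] K) :
    adjoint (columnOperator Φ) ∘L columnOperator Φ = ∑ k, adjoint (Φ k) ∘L Φ k := by
  refine ext fun ζ => ext_inner_left 𝕜 fun η => ?_
  simp only [comp_apply, sum_apply, inner_sum, adjoint_inner_right, PiLp.inner_apply,
    columnOperator_apply]

theorem sSup_sphere_sum_norm_sq_eq_norm_sum_adjoint_comp_self (Φ : ι → H →L[𝕜] K) :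
    sSup ((fun ζ => ∑ k, ‖Φ k ζ‖ ^ 2) '' Metric.sphere 0 1) = ‖∑ k, adjoint (Φ k) ∘L Φ k‖ := by
  rw [← adjoint_columnOperator_comp_self, norm_adjoint_comp_self, ← sq,
    ← sSup_sphere_norm_sq_eq_norm_sq]
  simp only [norm_sq_columnOperator_apply]

end ColumnOperator

section GramTrace

variable {𝕜 ι n E : Type*} [RCLike 𝕜] [Fintype ι] [Fintype n]
  [SeminormedAddCommGroup E] [InnerProductSpace 𝕜 E]

theorem trace_gram_mul_vecMulVec_star (v : n → E) (c : n → 𝕜) :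
    Matrix.trace (Matrix.gram 𝕜 v * Matrix.vecMulVec c (star c))
      = ((‖∑ i, c i • v i‖ ^ 2 : ℝ) : 𝕜) := by
  rw [Matrix.mul_vecMulVec, Matrix.trace_vecMulVec, dotProduct_comm,
    Matrix.star_dotProduct_gram_mulVec, inner_self_eq_norm_sq_to_K, RCLike.ofReal_pow]

theorem trace_gram_mul_sum_smul_vecMulVec_star (v : n → E) (lam : ι → ℝ) (c : ι → n → 𝕜) :
    Matrix.trace (Matrix.gram 𝕜 v * ∑ k, (lam k : 𝕜) • Matrix.vecMulVec (c k) (star (c k)))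
      = ((∑ k, lam k * ‖∑ i, c k i • v i‖ ^ 2 : ℝ) : 𝕜) := by
  simp only [Finset.mul_sum, Matrix.mul_smul, Matrix.trace_sum, Matrix.trace_smul,
    trace_gram_mul_vecMulVec_star, smul_eq_mul, RCLike.ofReal_sum, RCLike.ofReal_mul]

end GramTrace

section BlockOperator

variable {𝕜 X A R H K : Type*} [RCLike 𝕜] [Fintype X]
  [NormedAddCommGroup H] [NormedAddCommGroup K]

section NormedSpace

variable [NormedSpace 𝕜 H] [NormedSpace 𝕜 K]

/-- The vectors `v_{a,r} = ∑ x, conj ξ_{x,r} • U_{a,x} ζ`, i.e. the contraction of `U ζ` with `ξ`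
along `X`. Their Gram matrix is `(Γ_{U,ζ} ⊗ id)(ξξ*)`. -/
def contractedVector (U : A → X → H →L[𝕜] K) (ξ : X → R → 𝕜) (ζ : H) (p : A × R) : K :=
  ∑ x, starRingEnd 𝕜 (ξ x p.2) • U p.1 x ζ

theorem sum_smul_contractedVector [Fintype A] [Fintype R] (U : A → X → H →L[𝕜] K)
    (ξ : X → R → 𝕜) (ζ : H) (g : A → R → 𝕜) :
    ∑ p : A × R, g p.1 p.2 • contractedVector U ξ ζ p
      = (∑ x, ∑ a, (∑ r, g a r * starRingEnd 𝕜 (ξ x r)) • U a x) ζ := by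
  simp only [contractedVector, Finset.smul_sum, smul_smul, sum_apply, smul_apply, Finset.sum_smul]
  rw [Finset.sum_comm]
  simp only [Fintype.sum_prod_type]

end NormedSpace

theorem gram_contractedVector [InnerProductSpace 𝕜 H] [InnerProductSpace 𝕜 K]
    [CompleteSpace H] [CompleteSpace K]
    (U : A → X → H →L[𝕜] K) (ξ : X → R → 𝕜) (ζ : H) :
    Matrix.gram 𝕜 (contractedVector U ξ ζ) = Matrix.of fun p q =>
      ∑ x, ∑ x', inner 𝕜 ζ ((adjoint (U p.1 x) ∘L U q.1 x') ζ)
        * ξ x p.2 * starRingEnd 𝕜 (ξ x' q.2) := by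
  ext p q
  simp only [Matrix.gram_apply, Matrix.of_apply, contractedVector, sum_inner]
  refine Finset.sum_congr rfl fun x _ => ?_
  rw [inner_sum]
  refine Finset.sum_congr rfl fun x' _ => ?_
  rw [inner_smul_left, inner_smul_right, RCLike.conj_conj, comp_apply, adjoint_inner_right]
  ring

end BlockOperator

theorem statement7_general
    {𝕜 X A R ι H K : Type*} [RCLike 𝕜] [Fintype X] [Fintype A] [Fintype R] [Fintype ι]
    [NormedAddCommGroup H] [InnerProductSpace 𝕜 H] [CompleteSpace H]
    [NormedAddCommGroup K] [InnerProductSpace 𝕜 K] [CompleteSpace K]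
    (U : A → X → H →L[𝕜] K) (ξ : X → R → 𝕜)
    (lam : ι → ℝ) (hlam : ∀ k, 0 ≤ lam k) (γ : ι → A → R → 𝕜)
    (ρ : ι → X → A → 𝕜)
    (hρ : ∀ k x a, ρ k x a = (√(lam k) : 𝕜) * ∑ r, γ k a r * starRingEnd 𝕜 (ξ x r))
    (Φ : ι → H →L[𝕜] K) (hΦ : ∀ k, Φ k = ∑ x, ∑ a, ρ k x a • U a x)
    (P : Matrix (A × R) (A × R) 𝕜)
    (hP : P = Matrix.of fun p q =>
      ∑ k, (lam k : 𝕜) * γ k p.1 p.2 * starRingEnd 𝕜 (γ k q.1 q.2))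
    (M : H → Matrix (A × R) (A × R) 𝕜)
    (hM : ∀ ζ, M ζ = Matrix.of fun p q =>
      ∑ x, ∑ x', inner 𝕜 ζ ((adjoint (U p.1 x) ∘L U q.1 x') ζ)
        * ξ x p.2 * starRingEnd 𝕜 (ξ x' q.2)) :
    (∀ ζ, Matrix.trace (M ζ * P) = ((∑ k, ‖Φ k ζ‖ ^ 2 : ℝ) : 𝕜)) ∧
    sSup {t : ℝ | ∃ ζ : H, ‖ζ‖ = 1 ∧ (t : 𝕜) = Matrix.trace (M ζ * P)}
      = ‖∑ k, adjoint (Φ k) ∘L Φ k‖ := by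
  have hP_rankOne : P = ∑ k, (lam k : 𝕜) • Matrix.vecMulVec
      (fun p : A × R => γ k p.1 p.2) (star fun p : A × R => γ k p.1 p.2) := by
    ext p q
    simp only [hP, Matrix.of_apply, Matrix.sum_apply, Matrix.smul_apply, Matrix.vecMulVec_apply,
      Pi.star_apply, smul_eq_mul, RCLike.star_def, mul_assoc]
  have hΦ_apply (k : ι) (ζ : H) :
      Φ k ζ = (√(lam k) : 𝕜) • ∑ p : A × R, γ k p.1 p.2 • contractedVector U ξ ζ p := by
    simp only [sum_smul_contractedVector, hΦ, hρ, mul_smul, ← Finset.smul_sum, smul_apply]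
  have norm_sq_Φ_apply (k : ι) (ζ : H) : ‖Φ k ζ‖ ^ 2
      = lam k * ‖∑ p : A × R, γ k p.1 p.2 • contractedVector U ξ ζ p‖ ^ 2 := by
    rw [hΦ_apply, norm_smul, mul_pow, RCLike.norm_ofReal, sq_abs, Real.sq_sqrt (hlam k)]
  have trace_eq (ζ : H) : Matrix.trace (M ζ * P) = ((∑ k, ‖Φ k ζ‖ ^ 2 : ℝ) : 𝕜) := by
    simp only [hM, ← gram_contractedVector, hP_rankOne, trace_gram_mul_sum_smul_vecMulVec_star,
      norm_sq_Φ_apply]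
  refine ⟨trace_eq, ?_⟩
  rw [← sSup_sphere_sum_norm_sq_eq_norm_sum_adjoint_comp_self]
  simp only [trace_eq, RCLike.ofReal_inj, Set.image, mem_sphere_zero_iff_norm, eq_comm]

/-- The value of a pair `(ξ, P)` at a block-operator-isometry strategy:
the trace formula and its supremum over vector states. -/
theorem statement7
    {X A R : Type*} [Fintype X] [Fintype A] [Fintype R]
    [Nonempty X] [Nonempty A] [Nonempty R]
    [DecidableEq X] [DecidableEq A] [DecidableEq R]
    {H K : Type*}
    [NormedAddCommGroup H] [InnerProductSpace ℂ H] [CompleteSpace H]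
    [NormedAddCommGroup K] [InnerProductSpace ℂ K] [CompleteSpace K]
    (U : A → X → (H →L[ℂ] K))
    (hU : ∀ x x' : X, ∑ a : A, (adjoint (U a x)) ∘L (U a x') = if x = x' then 1 else 0)
    (ξc : X → R → ℂ) (hξ : ∑ x : X, ∑ r : R, ‖ξc x r‖ ^ 2 = 1)
    (m : ℕ) (lam : Fin m → ℝ) (hlam : ∀ k, 0 ≤ lam k)
    (γ : Fin m → A → R → ℂ)
    (hγ : ∀ k, ∑ a : A, ∑ r : R, ‖γ k a r‖ ^ 2 = 1)
    (ρm : Fin m → X → A → ℂ)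
    (hρ : ∀ k x a, ρm k x a
      = (Real.sqrt (lam k) : ℂ) * ∑ r : R, γ k a r * (starRingEnd ℂ) (ξc x r))
    (Φ : Fin m → (H →L[ℂ] K))
    (hΦ : ∀ k, Φ k = ∑ x : X, ∑ a : A, ρm k x a • U a x)
    (P : Matrix (A × R) (A × R) ℂ)
    (hP : P = Matrix.of fun p q =>
      ∑ k, (lam k : ℂ) * γ k p.1 p.2 * (starRingEnd ℂ) (γ k q.1 q.2))
    (M : H → Matrix (A × R) (A × R) ℂ)
    (hM : ∀ ζ : H, M ζ = Matrix.of fun p q =>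
      ∑ x : X, ∑ x' : X,
        (⟪ζ, ((adjoint (U p.1 x)) ∘L (U q.1 x')) ζ⟫ : ℂ)
          * ξc x p.2 * (starRingEnd ℂ) (ξc x' q.2)) :
    (∀ ζ : H, ‖ζ‖ = 1 →
        Matrix.trace (M ζ * P) = ((∑ k, ‖(Φ k) ζ‖ ^ 2 : ℝ) : ℂ)) ∧
    sSup {t : ℝ | ∃ ζ : H, ‖ζ‖ = 1 ∧ (t : ℂ) = Matrix.trace (M ζ * P)}
      = ‖∑ k, (adjoint (Φ k)) ∘L (Φ k)‖ := by
  have h := statement7_general U ξc lam hlam γ ρm hρ Φ hΦ P hP M hM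
  exact ⟨fun ζ _ => h.1 ζ, h.2⟩
end

section
/- Let A be a finite nonempty set, and let 𝒫_A denote the set of orthogonal projections in the matrix algebra M_A(ℂ), equipped with the Borel σ-algebra of the norm topology. Then there exist Borel functions λ_a : 𝒫_A → {0,1} and u_a : 𝒫_A → ℂ^A (a ∈ A), with ‖u_a(p)‖ = 1 for all p, such that for every p ∈ 𝒫_A the family (u_a(p))_{a∈A} is orthonormal and p = Σ_{a∈A} λ_a(p) · u_a(p) u_a(p)*, where u u* denotes the rank-one orthogonal projection onto the span of the unit vector u. -/
/-!
The vectors `p eᵢ` and `eᵢ - p eᵢ` are eigenvectors of the projection `p`, for the eigenvalues `1`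
and `0`. They depend continuously on `p` and together they span the whole space. Gram–Schmidt is a
measurable procedure, and it keeps every vector in its eigenspace: the correction terms coming from
the other eigenspace vanish. It turns the spanning family into an orthonormal basis padded with
zero vectors. The positions of the nonzero vectors form one of finitely many sets, each of which can
be enumerated once and for all, so the zero vectors can be discarded measurably.
-/

open InnerProductSpace Module Submodule

theorem exists_measurable_equiv {X ι A : Type*} [MeasurableSpace X] [MeasurableSpace ι] [Finite ι]
    {S : X → Set ι} (hS : Measurable S) (hcard : ∀ x, Nonempty (A ≃ S x)) :
    ∃ e : ∀ x, A ≃ S x, ∀ a, Measurable fun x ↦ (e x a : ι) := by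
  let enumeration (s : {s : Set ι // Nonempty (A ≃ s)}) : A ≃ s.1 := s.2.some
  have hS' : Measurable fun x ↦ (⟨S x, hcard x⟩ : {s : Set ι // Nonempty (A ≃ s)}) :=
    hS.subtype_mk
  exact ⟨fun x ↦ enumeration ⟨S x, hcard x⟩, fun a ↦
    (Measurable.of_discrete (f := fun s ↦ (enumeration s a : ι))).comp hS'⟩

section GramSchmidt

variable {𝕜 E ι : Type*} [RCLike 𝕜] [NormedAddCommGroup E] [InnerProductSpace 𝕜 E]
  [LinearOrder ι] [LocallyFiniteOrderBot ι] [WellFoundedLT ι]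

theorem gramSchmidt_mem_of_pairwise_isOrtho {κ : Type*} {V : κ → Submodule 𝕜 E}
    (hV : Pairwise fun k l ↦ V k ⟂ V l) {f : ι → E} {k : ι → κ} (hf : ∀ i, f i ∈ V (k i)) (i : ι) :
    gramSchmidt 𝕜 f i ∈ V (k i) := by
  induction i using WellFoundedLT.induction with
  | ind i ih =>
    rw [gramSchmidt_def]
    refine sub_mem (hf i) (sum_mem fun j hj ↦ ?_)
    have hj' := ih j (Finset.mem_Iio.mp hj)
    rw [starProjection_singleton]
    by_cases hk : k j = k i
    · exact smul_mem _ _ (hk ▸ hj')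
    · simp [(hV hk).inner_eq hj' (hf i)]

theorem gramSchmidtNormed_mem_of_pairwise_isOrtho {κ : Type*} {V : κ → Submodule 𝕜 E}
    (hV : Pairwise fun k l ↦ V k ⟂ V l) {f : ι → E} {k : ι → κ} (hf : ∀ i, f i ∈ V (k i)) (i : ι) :
    gramSchmidtNormed 𝕜 f i ∈ V (k i) :=
  smul_mem _ _ (gramSchmidt_mem_of_pairwise_isOrtho hV hf i)

theorem span_gramSchmidtNormed_support (f : ι → E) :
    span 𝕜 (Set.range fun i : Function.support (gramSchmidtNormed 𝕜 f) ↦ gramSchmidtNormed 𝕜 f i) =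
      span 𝕜 (Set.range f) := by
  have himage : gramSchmidtNormed 𝕜 f '' Function.support (gramSchmidtNormed 𝕜 f) =
      Set.range (gramSchmidtNormed 𝕜 f) \ {0} := by
    ext v
    simp only [Set.mem_image, Function.mem_support, Set.mem_sdiff, Set.mem_range,
      Set.mem_singleton_iff]
    grind
  rw [← Set.image_eq_range, himage, span_sdiff_singleton_zero, span_gramSchmidtNormed_range,
    span_gramSchmidt]

variable {A : Type*} [Fintype A]

theorem exists_orthonormalBasis_eq_gramSchmidtNormed {f : ι → E} (hf : span 𝕜 (Set.range f) = ⊤)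
    (e : A ≃ Function.support (gramSchmidtNormed 𝕜 f)) :
    ∃ b : OrthonormalBasis A 𝕜 E, ∀ a, b a = gramSchmidtNormed 𝕜 f (e a) := by
  have hortho : Orthonormal 𝕜 fun a ↦ gramSchmidtNormed 𝕜 f (e a) :=
    (gramSchmidtNormed_orthonormal' f).comp e e.injective
  have hspan : ⊤ ≤ span 𝕜 (Set.range fun a ↦ gramSchmidtNormed 𝕜 f (e a)) := by
    rw [← hf, ← span_gramSchmidtNormed_support, ← e.surjective.range_comp]
    rfl
  exact ⟨.mk hortho hspan, fun a ↦ by simp⟩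

theorem nonempty_equiv_support_gramSchmidtNormed [Finite ι] {f : ι → E}
    (hf : span 𝕜 (Set.range f) = ⊤) (hA : Fintype.card A = finrank 𝕜 E) :
    Nonempty (A ≃ Function.support (gramSchmidtNormed 𝕜 f)) := by
  let basis := Basis.mk (gramSchmidtNormed_orthonormal' (𝕜 := 𝕜) f).linearIndependent
    (hf ▸ span_gramSchmidtNormed_support f).ge
  rw [← Nat.card_eq_fintype_card, finrank_eq_nat_card_basis basis] at hA
  exact Finite.card_eq.mp hA

variable {X : Type*} [MeasurableSpace X] [MeasurableSpace E] [BorelSpace E]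
  [SecondCountableTopology E]

theorem measurable_gramSchmidt {f : ι → X → E} (hf : ∀ i, Measurable (f i)) (i : ι) :
    Measurable fun x ↦ gramSchmidt 𝕜 (f · x) i := by
  induction i using WellFoundedLT.induction with
  | ind i ih =>
    simp_rw +singlePass [gramSchmidt_def, starProjection_singleton]
    refine (hf i).sub (Finset.measurable_sum _ fun j hj ↦ ?_)
    have hj' := ih j (Finset.mem_Iio.mp hj)
    fun_prop

theorem measurable_gramSchmidtNormed {f : ι → X → E} (hf : ∀ i, Measurable (f i)) (i : ι) :
    Measurable fun x ↦ gramSchmidtNormed 𝕜 (f · x) i := by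
  have hi := measurable_gramSchmidt (𝕜 := 𝕜) hf i
  unfold gramSchmidtNormed
  fun_prop

theorem exists_measurable_orthonormalBasis_eq_gramSchmidtNormed [Finite ι] [MeasurableSpace ι]
    [MeasurableSingletonClass ι] {f : ι → X → E} (hf : ∀ i, Measurable (f i))
    (hspan : ∀ x, span 𝕜 (Set.range (f · x)) = ⊤) (hA : Fintype.card A = finrank 𝕜 E) :
    ∃ (s : A → X → ι) (b : X → OrthonormalBasis A 𝕜 E),
      (∀ a, Measurable (s a)) ∧ (∀ a, Measurable (b · a)) ∧
      ∀ a x, b x a = gramSchmidtNormed 𝕜 (f · x) (s a x) := by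
  have hg := measurable_gramSchmidtNormed (𝕜 := 𝕜) hf
  have hsupport : Measurable fun x ↦ Function.support (gramSchmidtNormed 𝕜 (f · x)) :=
    measurable_set_iff.mpr fun i ↦
      measurableSet_setOfPred.mp ((hg i) (measurableSet_singleton 0)).compl
  obtain ⟨e, he⟩ := exists_measurable_equiv hsupport fun x ↦
    nonempty_equiv_support_gramSchmidtNormed (hspan x) hA
  choose b hb using fun x ↦ exists_orthonormalBasis_eq_gramSchmidtNormed (hspan x) (e x)
  refine ⟨fun a x ↦ e x a, b, he, fun a ↦ ?_, fun a x ↦ hb x a⟩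
  simp only [hb]
  exact (measurable_from_prod_countable_right (f := fun q : ι × X ↦
    gramSchmidtNormed 𝕜 (f · q.2) q.1) hg).comp ((he a).prodMk measurable_id)

end GramSchmidt

section Spectral

variable {𝕜 E ι A X : Type*} [RCLike 𝕜] [NormedAddCommGroup E] [InnerProductSpace 𝕜 E] [Fintype A]

theorem eq_sum_smul_rankOne {T : E →ₗ[𝕜] E} (b : OrthonormalBasis A 𝕜 E) {μ : A → 𝕜}
    (hb : ∀ a, T (b a) = μ a • b a) :
    T = ∑ a, μ a • (rankOne 𝕜 (b a) (b a)).toLinearMap := by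
  refine b.toBasis.ext fun a ↦ ?_
  classical simp [hb, b.inner_eq_ite]

variable [MeasurableSpace X] [MeasurableSpace E] [BorelSpace E]

theorem exists_measurable_orthonormalBasis_mem [SecondCountableTopology E]
    [Finite ι] {κ : Type*} [MeasurableSpace κ]
    {V : X → κ → Submodule 𝕜 E} (hV : ∀ x, Pairwise fun k l ↦ V x k ⟂ V x l)
    {f : ι → X → E} (hf : ∀ i, Measurable (f i)) (hspan : ∀ x, span 𝕜 (Set.range (f · x)) = ⊤)
    {k : ι → κ} (hfV : ∀ i x, f i x ∈ V x (k i)) (hA : Fintype.card A = finrank 𝕜 E) :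
    ∃ (c : A → X → κ) (b : X → OrthonormalBasis A 𝕜 E),
      (∀ a, Measurable (c a)) ∧ (∀ a, Measurable (b · a)) ∧ (∀ a x, c a x ∈ Set.range k) ∧
      ∀ a x, b x a ∈ V x (c a x) := by
  let enum := (Finite.equivFin ι).symm
  have hspan' (x : X) : span 𝕜 (Set.range fun i ↦ f (enum i) x) = ⊤ := by
    rw [← hspan x, ← enum.surjective.range_comp]
    rfl
  obtain ⟨s, b, hs, hb, hbs⟩ := exists_measurable_orthonormalBasis_eq_gramSchmidtNormed
    (fun i ↦ hf (enum i)) hspan' hA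
  refine ⟨fun a x ↦ k (enum (s a x)), b, fun a ↦ ?_, hb, fun a x ↦ ⟨_, rfl⟩, fun a x ↦ ?_⟩
  · exact (Measurable.of_discrete (f := fun i ↦ k (enum i))).comp (hs a)
  · rw [hbs]
    exact gramSchmidtNormed_mem_of_pairwise_isOrtho (k := fun i ↦ k (enum i)) (hV x)
      (fun i ↦ hfV (enum i) x) (s a x)

theorem exists_measurable_spectral_decomposition [SecondCountableTopology E] [Finite ι]
    {T : X → E →ₗ[𝕜] E} (hT : ∀ x, (T x).IsSymmetric) {f : ι → X → E}
    (hf : ∀ i, Measurable (f i)) (hspan : ∀ x, span 𝕜 (Set.range (f · x)) = ⊤)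
    {μ : ι → ℝ} (hfμ : ∀ i x, T x (f i x) = (μ i : 𝕜) • f i x)
    (hA : Fintype.card A = finrank 𝕜 E) :
    ∃ (lam : A → X → ℝ) (b : X → OrthonormalBasis A 𝕜 E),
      (∀ a, Measurable (lam a)) ∧ (∀ a, Measurable (b · a)) ∧
      (∀ a x, lam a x ∈ Set.range μ) ∧
      ∀ x, T x = ∑ a, (lam a x : 𝕜) • (rankOne 𝕜 (b x a) (b x a)).toLinearMap := by
  have hV (x : X) : Pairwise fun r s : ℝ ↦ End.eigenspace (T x) (r : 𝕜) ⟂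
      End.eigenspace (T x) (s : 𝕜) := fun r s hrs ↦
    (hT x).orthogonalFamily_eigenspaces.isOrtho (by exact_mod_cast hrs)
  obtain ⟨lam, b, hlam, hb, hlamμ, hbV⟩ := exists_measurable_orthonormalBasis_mem hV hf hspan
    (fun i x ↦ End.mem_eigenspace_iff.mpr (hfμ i x)) hA
  exact ⟨lam, b, hlam, hb, hlamμ, fun x ↦
    eq_sum_smul_rankOne (b x) fun a ↦ End.mem_eigenspace_iff.mp (hbV a x)⟩

theorem exists_measurable_spectral_decomposition_of_isSymmetricProjection [FiniteDimensional 𝕜 E]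
    {P : X → E →ₗ[𝕜] E} (hP : ∀ x, (P x).IsSymmetricProjection)
    (hPmeas : ∀ v, Measurable (P · v)) (hA : Fintype.card A = finrank 𝕜 E) :
    ∃ (lam : A → X → ℝ) (b : X → OrthonormalBasis A 𝕜 E),
      (∀ a, Measurable (lam a)) ∧ (∀ a, Measurable (b · a)) ∧
      (∀ a x, lam a x = 0 ∨ lam a x = 1) ∧
      ∀ x, P x = ∑ a, (lam a x : 𝕜) • (rankOne 𝕜 (b x a) (b x a)).toLinearMap := by
  have := FiniteDimensional.proper_rclike 𝕜 E
  let e := finBasis 𝕜 E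
  let f : Fin (finrank 𝕜 E) ⊕ Fin (finrank 𝕜 E) → X → E :=
    Sum.elim (fun i x ↦ P x (e i)) (fun i x ↦ e i - P x (e i))
  let μ : Fin (finrank 𝕜 E) ⊕ Fin (finrank 𝕜 E) → ℝ := Sum.elim 1 0
  have hf : ∀ i, Measurable (f i) := by
    rintro (i | i)
    · exact hPmeas (e i)
    · exact measurable_const.sub (hPmeas (e i))
  have hspan (x : X) : span 𝕜 (Set.range (f · x)) = ⊤ := by
    refine eq_top_iff.mpr (e.span_eq ▸ span_le.mpr ?_)
    rintro _ ⟨i, rfl⟩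
    have hadd : f (.inl i) x + f (.inr i) x = e i := add_sub_cancel _ _
    exact hadd ▸ add_mem (subset_span ⟨.inl i, rfl⟩) (subset_span ⟨.inr i, rfl⟩)
  have hfμ : ∀ i x, P x (f i x) = (μ i : 𝕜) • f i x := by
    have hPP (x : X) (v : E) : P x (P x v) = P x v := congr($((hP x).isIdempotentElem) v)
    rintro (i | i) x <;> simp [f, μ, hPP]
  obtain ⟨lam, b, hlam, hb, hlamμ, hdecomp⟩ :=
    exists_measurable_spectral_decomposition (fun x ↦ (hP x).isSymmetric) hf hspan hfμ hA
  refine ⟨lam, b, hlam, hb, fun a x ↦ ?_, hdecomp⟩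
  obtain ⟨i | i, hi⟩ := hlamμ a x
  · exact .inr hi.symm
  · exact .inl hi.symm

end Spectral

theorem isSymmetricProjection_toEuclideanLin {𝕜 A : Type*} [RCLike 𝕜] [Fintype A] [DecidableEq A]
    {p : Matrix A A 𝕜} (hp : IsStarProjection p) :
    (Matrix.toEuclideanLin p).IsSymmetricProjection where
  isSymmetric := Matrix.isSymmetric_toEuclideanLin_iff.mpr hp.isSelfAdjoint
  isIdempotentElem := by
    have h := (hp.map (Matrix.toEuclideanCLM (n := A) (𝕜 := 𝕜))).isIdempotentElem
    exact congr(($h.eq).toLinearMap)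

theorem statement8_general {𝕜 A X : Type*} [RCLike 𝕜] [Fintype A] [DecidableEq A]
    [MeasurableSpace X] {p : X → Matrix A A 𝕜} (hpmeas : ∀ i j, Measurable fun x ↦ p x i j)
    (hp : ∀ x, IsStarProjection (p x)) :
    ∃ (lam : A → X → ℝ) (u : A → X → (A → 𝕜)),
      (∀ a, Measurable (lam a)) ∧
      (∀ a, Measurable (u a)) ∧
      (∀ a x, lam a x = 0 ∨ lam a x = 1) ∧
      (∀ x a b, ∑ i, (starRingEnd 𝕜) (u a x i) * u b x i = if a = b then 1 else 0) ∧
      (∀ x, p x = ∑ a, lam a x • Matrix.vecMulVec (u a x) (star (u a x))) := by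
  have hPmeas (v : EuclideanSpace 𝕜 A) : Measurable fun x ↦ Matrix.toEuclideanLin (p x) v := by
    refine (WithLp.measurable_toLp 2 _).comp (measurable_pi_lambda _ fun i ↦ ?_)
    exact Finset.measurable_sum _ fun j _ ↦ (hpmeas i j).mul_const _
  obtain ⟨lam, b, hlam, hb, hlam01, hdecomp⟩ :=
    exists_measurable_spectral_decomposition_of_isSymmetricProjection
      (fun x ↦ isSymmetricProjection_toEuclideanLin (hp x)) hPmeas finrank_euclideanSpace.symm
  refine ⟨lam, fun a x ↦ b x a, hlam, fun a ↦ (WithLp.measurable_ofLp 2 _).comp (hb a), hlam01,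
    fun x a a' ↦ ?_, fun x ↦ ?_⟩
  · rw [← (b x).inner_eq_ite a a']
    simp [PiLp.inner_apply, mul_comm]
  · apply Matrix.toEuclideanLin.injective
    rw [hdecomp x, ← LinearEquiv.symm_apply_eq]
    simp only [map_sum, map_smul, symm_toEuclideanLin_rankOne,
      RCLike.real_smul_eq_coe_smul (K := 𝕜)]

/-- Borel-measurable selection of spectral decompositions of
orthogonal projections in `M_A(ℂ)`. -/
theorem statement8
    {A : Type*} [Fintype A] [Nonempty A] [DecidableEq A]
    [MeasurableSpace (Matrix A A ℂ)] [BorelSpace (Matrix A A ℂ)]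
    (PA : Set (Matrix A A ℂ))
    (hPA : PA = {p : Matrix A A ℂ | p.IsHermitian ∧ p * p = p}) :
    ∃ (lam : A → PA → ℝ) (u : A → PA → (A → ℂ)),
      (∀ a, Measurable (lam a)) ∧
      (∀ a, Measurable (u a)) ∧
      (∀ a p, lam a p = 0 ∨ lam a p = 1) ∧
      (∀ (p : PA) (a b : A),
        ∑ i : A, (starRingEnd ℂ) (u a p i) * u b p i = if a = b then 1 else 0) ∧
      (∀ p : PA, (p : Matrix A A ℂ)
        = ∑ a : A, lam a p • Matrix.vecMulVec (u a p) (star (u a p))) := by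
  subst hPA
  exact statement8_general (fun i j ↦ (continuous_id.matrix_elem i j).measurable.comp
    measurable_subtype_coe) fun p ↦ ⟨p.2.2, p.2.1⟩
end

section
/- Let A and B be unital C*-algebras, H a complex Hilbert space, and let φ : A → B(H) and ψ : B → B(H) be unital completely positive linear maps with commuting ranges, i.e. φ(a) ψ(b) = ψ(b) φ(a) for all a ∈ A and b ∈ B. Then there exist a complex Hilbert space K, an isometry V : H → K, and unital *-homomorphisms π : A → B(K) and ρ : B → B(K) with commuting ranges (π(a) ρ(b) = ρ(b) π(a) for all a ∈ A, b ∈ B), such that φ(a) ψ(b) = V* π(a) ρ(b) V for all a ∈ A and b ∈ B. -/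
open ContinuousLinearMap Matrix
open scoped ComplexInnerProductSpace ComplexOrder

universe u

/-- A bundled complex Hilbert space. -/
structure HilbertC : Type (u + 1) where
  carrier : Type u
  [nacg : NormedAddCommGroup carrier]
  [ips : InnerProductSpace ℂ carrier]
  [cs : CompleteSpace carrier]

attribute [instance] HilbertC.nacg HilbertC.ips HilbertC.cs

/-- A linear map `φ : A → B(H)` from a unital C*-algebra is completely positive if,
for every `n` and every positive matrix `M = N* N ∈ Mₙ(A)`, the block operator
`(φ(M i j))_{i,j}` on `Hⁿ` is positive. -/
def IsCPMapCStar {A : Type*}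
    [NormedRing A] [StarRing A] [CStarRing A] [CompleteSpace A]
    [NormedAlgebra ℂ A] [StarModule ℂ A]
    {H : Type*} [NormedAddCommGroup H] [InnerProductSpace ℂ H]
    (φ : A →ₗ[ℂ] (H →L[ℂ] H)) : Prop :=
  ∀ (n : ℕ) (M : Matrix (Fin n) (Fin n) A),
    (∃ N : Matrix (Fin n) (Fin n) A, M = Nᴴ * N) →
    ∀ ξ : Fin n → H, 0 ≤ ∑ i, ∑ j, (⟪ξ i, (φ (M i j)) (ξ j)⟫ : ℂ)

/-!
On the `*`-monoid `A × B` consider the operator-valued function `κ (a, b) = φ a ψ b`. Its Gram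
kernel `(s, t) ↦ κ (s⋆ t)` is the entrywise product of the Gram kernels of `φ` and of `ψ`, which are
positive by complete positivity and have commuting entries; an operator-valued Schur product
theorem therefore makes the Gram kernel of `κ` positive. Let `𝕂` be its reproducing kernel Hilbert
space, with kernel functions `k s : H → 𝕂`, so that `(k s)⋆ (k t) = κ (s⋆ t)`. The translation
`k s ↦ k (u s)` preserves Gram operators when `u ∈ A` or `u ∈ B` is unitary, hence extends to an
isometry of `𝕂`. A C⋆-algebra is spanned by its unitaries, so translations by all its elements are
bounded; they form `*`-homomorphisms `π` and `ρ`, which commute because `(a, 1)` and `(1, b)` do,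
and `V = k 1`.
-/

section OperatorMatrices

variable {X ι H : Type*} [NormedAddCommGroup H] [InnerProductSpace ℂ H]

/-- The operator on the Hilbert sum `⨁ᵢ H` with matrix `M`, through which positivity of `M` can be
expressed and its square root taken. The Hilbert sum is `PiLp 2`. -/
noncomputable def blockOperator [Fintype ι] (M : Matrix ι ι (H →L[ℂ] H)) :
    PiLp 2 (fun _ : ι => H) →L[ℂ] PiLp 2 (fun _ : ι => H) :=
  (PiLp.continuousLinearEquiv 2 ℂ _).symm.toContinuousLinearMap ∘L
    ContinuousLinearMap.pi fun i => ∑ j, M i j ∘L PiLp.proj 2 (fun _ : ι => H) j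

theorem blockOperator_apply [Fintype ι] (M : Matrix ι ι (H →L[ℂ] H))
    (x : PiLp 2 (fun _ : ι => H)) (i : ι) : blockOperator M x i = ∑ j, M i j (x j) := by
  simp [blockOperator]

theorem blockOperator_single_apply [Fintype ι] [DecidableEq ι] (M : Matrix ι ι (H →L[ℂ] H))
    (i j : ι) (v : H) : blockOperator M (PiLp.single 2 j v) i = M i j v := by
  rw [blockOperator_apply, Finset.sum_eq_single j (fun k _ hk => by simp [hk]) (by simp)]
  simp

theorem blockOperator_diagonal_const_apply [Fintype ι] [DecidableEq ι] (T : H →L[ℂ] H)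
    (x : PiLp 2 (fun _ : ι => H)) (i : ι) :
    blockOperator (diagonal fun _ => T) x i = T (x i) := by
  rw [blockOperator_apply, Finset.sum_eq_single i (fun k _ hk => by simp [hk.symm]) (by simp)]
  simp

theorem commute_blockOperator_diagonal_const [Fintype ι] [DecidableEq ι]
    {M : Matrix ι ι (H →L[ℂ] H)} {T : H →L[ℂ] H} (hM : ∀ i j, Commute (M i j) T) :
    Commute (blockOperator M) (blockOperator (diagonal fun _ => T)) := by
  ext x i
  simp only [mul_apply_eq_comp, blockOperator_apply M, blockOperator_diagonal_const_apply, map_sum]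
  exact Finset.sum_congr rfl fun j _ => congr($(hM i j) (x j))

theorem inner_piLp_single_left [Fintype ι] [DecidableEq ι] (i : ι) (v : H)
    (x : PiLp 2 (fun _ : ι => H)) : ⟪PiLp.single 2 i v, x⟫ = ⟪v, x i⟫ := by
  rw [PiLp.inner_apply, Finset.sum_eq_single i (fun k _ hk => by simp [hk]) (by simp)]
  simp

theorem isPositive_blockOperator_iff [Fintype ι] {M : Matrix ι ι (H →L[ℂ] H)} :
    (blockOperator M).IsPositive ↔ ∀ ξ : ι → H, 0 ≤ ∑ i, ∑ j, ⟪ξ i, M i j (ξ j)⟫ := by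
  have inner_eq (x : PiLp 2 (fun _ : ι => H)) :
      ⟪x, blockOperator M x⟫ = ∑ i, ∑ j, ⟪x i, M i j (x j)⟫ := by
    simp only [PiLp.inner_apply, blockOperator_apply, inner_sum]
  refine ⟨fun h ξ => ?_, fun h => (isPositive_iff_complex _).mpr fun x => ?_⟩
  · simpa only [inner_eq] using h.inner_nonneg_right (WithLp.toLp 2 ξ)
  · have hx : 0 ≤ ⟪x, blockOperator M x⟫ := inner_eq x ▸ h x.ofLp
    rw [← inner_conj_symm, RCLike.conj_eq_iff_im.mpr (RCLike.nonneg_iff.mp hx).2]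
    exact ⟨RCLike.conj_eq_iff_re.mp (RCLike.conj_eq_iff_im.mpr (RCLike.nonneg_iff.mp hx).2),
      (RCLike.nonneg_iff.mp hx).1⟩

variable [CompleteSpace H]

theorem isSymmetric_blockOperator_iff [Fintype ι] {M : Matrix ι ι (H →L[ℂ] H)} :
    (blockOperator M).toLinearMap.IsSymmetric ↔ M.IsHermitian := by
  classical
  refine ⟨fun hM => ?_, fun hM x y => ?_⟩
  · ext i j v
    refine ext_inner_left ℂ fun w => ?_
    calc ⟪w, adjoint (M j i) v⟫ = ⟪M j i w, v⟫ := adjoint_inner_right _ _ _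
      _ = ⟪blockOperator M (PiLp.single 2 i w), PiLp.single 2 j v⟫ := by
        rw [← inner_conj_symm, ← blockOperator_single_apply M, ← inner_piLp_single_left,
          inner_conj_symm]
      _ = ⟪PiLp.single 2 i w, blockOperator M (PiLp.single 2 j v)⟫ := hM _ _
      _ = ⟪w, M i j v⟫ := by rw [inner_piLp_single_left, blockOperator_single_apply]
  · have inner_eq (i j : ι) : ⟪M i j (x j), y i⟫ = ⟪x j, M j i (y i)⟫ := by
      rw [← hM.apply j i, star_eq_adjoint, adjoint_inner_right]
    simp only [coe_coe, PiLp.inner_apply, blockOperator_apply, sum_inner, inner_sum, inner_eq]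
    exact Finset.sum_comm

theorem posSemidef_iff_isPositive_blockOperator [Fintype ι] {M : Matrix ι ι (H →L[ℂ] H)} :
    M.PosSemidef ↔ (blockOperator M).IsPositive := by
  have tfae := (RKHS.posSemidef_tfae (K := M)).out 0 2
  rw [tfae, IsPositive, isSymmetric_blockOperator_iff]
  refine and_congr_right fun _ => ?_
  have sum_eq (ξ : ι →₀ H) :
      (ξ.sum fun x w => ξ.sum fun x' w' => ⟪M x' x w, w'⟫) =
        ⟪blockOperator M (WithLp.toLp 2 ξ), WithLp.toLp 2 ξ⟫ := by
    simp only [Finsupp.sum_fintype, inner_zero_right, map_zero, inner_zero_left,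
      Finset.sum_const_zero, implies_true, PiLp.inner_apply, blockOperator_apply, sum_inner]
    exact Finset.sum_comm
  simp only [sum_eq, reApplyInnerSelf]
  exact ⟨fun h x => h (Finsupp.equivFunOnFinite.symm x.ofLp), fun h ξ => h (WithLp.toLp 2 ξ)⟩

theorem posSemidef_iff_forall_submatrix_fin {R : Type*} [Ring R] [PartialOrder R] [StarRing R]
    {K : Matrix X X R} :
    K.PosSemidef ↔ ∀ (n : ℕ) (x : Fin n → X), (K.submatrix x x).PosSemidef := by
  refine ⟨fun h n x => h.submatrix x, fun h => ⟨?_, fun ξ => ?_⟩⟩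
  · ext x y : 2
    exact congrFun₂ (h 2 ![x, y]).isHermitian 0 1
  · let e : Fin ξ.support.card ↪ X :=
      ξ.support.equivFin.symm.toEmbedding.trans (Function.Embedding.subtype _)
    have support_subset : ↑ξ.support ⊆ Set.range e := fun x hx =>
      ⟨ξ.support.equivFin ⟨x, hx⟩, by simp [e]⟩
    rw [← Finsupp.embDomain_comapDomain support_subset]
    simpa only [Finsupp.sum_embDomain, submatrix_apply] using
      (h _ e).2 (ξ.comapDomain e e.injective.injOn)

theorem isPositive_blockOperator_hadamard [Fintype ι] {P Q : Matrix ι ι (H →L[ℂ] H)}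
    (hP : (blockOperator P).IsPositive) (hQ : (blockOperator Q).IsPositive)
    (hPQ : ∀ i j k l, Commute (P i j) (Q k l)) : (blockOperator (P ⊙ Q)).IsPositive := by
  classical
  rw [isPositive_blockOperator_iff] at hP ⊢
  intro ξ
  let r := CFC.sqrt (blockOperator Q)
  have sqrt_mul_sqrt : r * r = blockOperator Q :=
    CFC.sqrt_mul_sqrt_self _ ((nonneg_iff_isPositive _).mpr hQ)
  have sqrt_symm : r.toLinearMap.IsSymmetric :=
    (CFC.sqrt_nonneg (blockOperator Q)).isSelfAdjoint.isSymmetric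
  have sqrt_comm (i j : ι) : Commute r (blockOperator (diagonal fun _ => P i j)) :=
    (commute_blockOperator_diagonal_const fun k l => (hPQ i j k l).symm).cfcₙ_nnreal NNReal.sqrt
  let w (i : ι) := r (PiLp.single 2 i (ξ i))
  have inner_eq (i j : ι) :
      ⟪ξ i, (P ⊙ Q) i j (ξ j)⟫ = ∑ k, ⟪w i k, P i j (w j k)⟫ := calc
    ⟪ξ i, (P ⊙ Q) i j (ξ j)⟫
    _ = ⟪PiLp.single 2 i (ξ i), blockOperator (diagonal fun _ => P i j)
          (blockOperator Q (PiLp.single 2 j (ξ j)))⟫ := by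
      rw [inner_piLp_single_left, blockOperator_diagonal_const_apply,
        blockOperator_single_apply]
      rfl
    _ = ⟪PiLp.single 2 i (ξ i), r (blockOperator (diagonal fun _ => P i j) (w j))⟫ := by
      rw [← sqrt_mul_sqrt]
      exact congr(⟪_, $((sqrt_comm i j).symm) (w j)⟫)
    _ = ⟪w i, blockOperator (diagonal fun _ => P i j) (w j)⟫ := (sqrt_symm _ _).symm
    _ = ∑ k, ⟪w i k, P i j (w j k)⟫ := by
      simp only [PiLp.inner_apply, blockOperator_diagonal_const_apply]
  calc (0 : ℂ) ≤ ∑ k, ∑ i, ∑ j, ⟪w i k, P i j (w j k)⟫ :=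
      Finset.sum_nonneg fun k _ => hP fun i => w i k
    _ = ∑ i, ∑ j, ⟪ξ i, (P ⊙ Q) i j (ξ j)⟫ := by
      simp only [inner_eq]
      rw [Finset.sum_comm]
      exact Finset.sum_congr rfl fun i _ => Finset.sum_comm

theorem posSemidef_hadamard_of_commute {P Q : Matrix X X (H →L[ℂ] H)} (hP : P.PosSemidef)
    (hQ : Q.PosSemidef) (hPQ : ∀ x y z w, Commute (P x y) (Q z w)) : (P ⊙ Q).PosSemidef := by
  refine posSemidef_iff_forall_submatrix_fin.mpr fun n x =>
    posSemidef_iff_isPositive_blockOperator.mpr ?_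
  exact isPositive_blockOperator_hadamard
    (posSemidef_iff_isPositive_blockOperator.mp (hP.submatrix x))
    (posSemidef_iff_isPositive_blockOperator.mp (hQ.submatrix x)) fun _ _ _ _ => hPQ _ _ _ _

end OperatorMatrices

section GramKernel

variable {S R : Type*} [Mul S] [Star S]

/-- The Gram kernel `(s, t) ↦ κ (s⋆ t)` of a function `κ` on a `*`-monoid: it is positive
semidefinite exactly when `κ` is a function of positive type in the sense of Sz.-Nagy. -/
def gramKernel (κ : S → R) : Matrix S S R :=
  .of fun s t => κ (star s * t)

@[simp]
theorem gramKernel_apply (κ : S → R) (s t : S) : gramKernel κ s t = κ (star s * t) := rfl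

theorem IsCPMapCStar.posSemidef_gramKernel {A : Type*} [NormedRing A] [StarRing A] [CStarRing A]
    [CompleteSpace A] [NormedAlgebra ℂ A] [StarModule ℂ A] {H : Type*} [NormedAddCommGroup H]
    [InnerProductSpace ℂ H] [CompleteSpace H] {φ : A →ₗ[ℂ] (H →L[ℂ] H)} (hφ : IsCPMapCStar φ) :
    (gramKernel φ).PosSemidef := by
  refine posSemidef_iff_forall_submatrix_fin.mpr fun n a =>
    posSemidef_iff_isPositive_blockOperator.mpr <| isPositive_blockOperator_iff.mpr ?_
  obtain _ | n := n
  · simp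
  · -- `(aᵢ⋆ aⱼ) = N⋆ N`, where `N` has first row `a` and all other rows zero.
    refine hφ (n + 1) (.of fun i j => star (a i) * a j)
      ⟨.of fun i j => if i = 0 then a j else 0, ?_⟩
    ext i j
    simp [Matrix.mul_apply, conjTranspose_apply]

end GramKernel

section Dilation

open RKHS

variable {𝕜 : Type*} [RCLike 𝕜]

section GramOperators

variable {ι E F G : Type*} [NormedAddCommGroup E] [InnerProductSpace 𝕜 E] [CompleteSpace E]
  [NormedAddCommGroup F] [InnerProductSpace 𝕜 F] [CompleteSpace F]
  [NormedAddCommGroup G] [InnerProductSpace 𝕜 G] [CompleteSpace G]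
  {f : ι → E →L[𝕜] F} {g : ι → E →L[𝕜] G}

theorem norm_lsum_eq_of_adjoint_comp_eq
    (hfg : ∀ i j, adjoint (f i) ∘L f j = adjoint (g i) ∘L g j) (ξ : ι →₀ E) :
    ‖Finsupp.lsum 𝕜 (fun i => (g i).toLinearMap) ξ‖ =
      ‖Finsupp.lsum 𝕜 (fun i => (f i).toLinearMap) ξ‖ := by
  have inner_eq (i j : ι) (v w : E) : inner 𝕜 (g i v) (g j w) = inner 𝕜 (f i v) (f j w) := by
    rw [← adjoint_inner_right, ← adjoint_inner_right]
    exact congr(inner 𝕜 v ($((hfg i j).symm) w))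
  simp only [@norm_eq_sqrt_re_inner 𝕜, Finsupp.lsum_apply, Finsupp.sum_inner, Finsupp.inner_sum,
    coe_coe, inner_eq]

theorem exists_comp_eq_of_adjoint_comp_eq
    (hf : DenseRange (Finsupp.lsum 𝕜 fun i => (f i).toLinearMap))
    (hfg : ∀ i j, adjoint (f i) ∘L f j = adjoint (g i) ∘L g j) :
    ∃ T : F →L[𝕜] G, ∀ i, T ∘L f i = g i := by
  let sumF := Finsupp.lsum 𝕜 fun i => (f i).toLinearMap
  let sumG := Finsupp.lsum 𝕜 fun i => (g i).toLinearMap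
  refine ⟨sumG.extendOfNorm sumF, fun i => ContinuousLinearMap.ext fun v => ?_⟩
  have bound : ∃ C, ∀ ξ, ‖sumG ξ‖ ≤ C * ‖sumF ξ‖ :=
    ⟨1, fun ξ => by rw [one_mul, norm_lsum_eq_of_adjoint_comp_eq hfg ξ]⟩
  simpa [sumF, sumG] using LinearMap.extendOfNorm_eq hf bound (Finsupp.single i v)

end GramOperators

variable {X S H 𝕂 : Type*} [NormedAddCommGroup H] [InnerProductSpace 𝕜 H] [CompleteSpace H]
  [NormedAddCommGroup 𝕂] [InnerProductSpace 𝕜 𝕂] [CompleteSpace 𝕂]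

theorem denseRange_lsum_kerFun [RKHS 𝕜 𝕂 X H] :
    DenseRange (Finsupp.lsum 𝕜 fun x => (kerFun 𝕂 x).toLinearMap) := by
  refine (Submodule.dense_iff_topologicalClosure_eq_top.mpr (kerFun_dense 𝕂)).mono ?_
  rw [← LinearMap.coe_range, SetLike.coe_subset_coe, Submodule.span_le]
  rintro _ ⟨x, v, rfl⟩
  exact ⟨Finsupp.single x v, by simp⟩

theorem eq_of_comp_kerFun_eq [RKHS 𝕜 𝕂 X H] {E : Type*} [NormedAddCommGroup E]
    [NormedSpace 𝕜 E] {T T' : 𝕂 →L[𝕜] E} (h : ∀ x, T ∘L kerFun 𝕂 x = T' ∘L kerFun 𝕂 x) :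
    T = T' := by
  refine ContinuousLinearMap.ext_on
    (Submodule.dense_iff_topologicalClosure_eq_top.mpr (kerFun_dense 𝕂)) ?_
  rintro _ ⟨x, v, rfl⟩
  exact congr($(h x) v)

theorem adjoint_kerFun_comp_kerFun_of_kernel_eq [Mul S] [Star S] [RKHS 𝕜 𝕂 S H]
    {κ : S → H →L[𝕜] H} (hκ : kernel 𝕂 = gramKernel κ) (s t : S) :
    adjoint (kerFun 𝕂 s) ∘L kerFun 𝕂 t = κ (star s * t) := by
  rw [← kernel_apply, hκ, gramKernel_apply]

theorem isLinearMap_kerFun_mul [Semigroup S] [Star S] [RKHS 𝕜 𝕂 S H] {κ : S → H →L[𝕜] H}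
    {C : Type*} [AddCommMonoid C] [Module 𝕜 C] {j : C → S} (hκ : kernel 𝕂 = gramKernel κ)
    (hj : ∀ s t, IsLinearMap 𝕜 fun c => κ (s * j c * t)) (s : S) :
    IsLinearMap 𝕜 fun c => kerFun 𝕂 (j c * s) where
  map_add a b := by
    ext v t
    simp only [_root_.add_apply, coe_add, Pi.add_apply, kerFun_apply, hκ, gramKernel_apply,
      ← mul_assoc, (hj (star t) s).map_add]
  map_smul r a := by
    ext v t
    simp only [_root_.smul_apply, coe_smul, Pi.smul_apply, kerFun_apply, hκ, gramKernel_apply,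
      ← mul_assoc, (hj (star t) s).map_smul]

variable [Monoid S] [StarMul S] [RKHS 𝕜 𝕂 S H] {κ : S → H →L[𝕜] H}

theorem exists_comp_kerFun_eq_of_star_mul_self (hκ : kernel 𝕂 = gramKernel κ) {u : S}
    (hu : star u * u = 1) : ∃ T : 𝕂 →L[𝕜] 𝕂, ∀ s, T ∘L kerFun 𝕂 s = kerFun 𝕂 (u * s) := by
  refine exists_comp_eq_of_adjoint_comp_eq denseRange_lsum_kerFun fun s t => ?_
  simp only [adjoint_kerFun_comp_kerFun_of_kernel_eq hκ, star_mul, mul_assoc]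
  rw [← mul_assoc (star u), hu, one_mul]

variable {C : Type*} [Semiring C] [StarRing C] [Algebra 𝕜 C] {j : C →⋆* S}

theorem exists_comp_kerFun_eq (hκ : kernel 𝕂 = gramKernel κ)
    (hC : Submodule.span 𝕜 (unitary C : Set C) = ⊤)
    (hj : ∀ s t, IsLinearMap 𝕜 fun c => κ (s * j c * t)) (c : C) :
    ∃ T : 𝕂 →L[𝕜] 𝕂, ∀ s, T ∘L kerFun 𝕂 s = kerFun 𝕂 (j c * s) := by
  have linear := isLinearMap_kerFun_mul (𝕂 := 𝕂) hκ hj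
  have hc : c ∈ Submodule.span 𝕜 (unitary C : Set C) := hC ▸ Submodule.mem_top
  induction hc using Submodule.span_induction with
  | mem u hu =>
    refine exists_comp_kerFun_eq_of_star_mul_self hκ ?_
    rw [← map_star, ← map_mul, Unitary.star_mul_self_of_mem hu, map_one]
  | zero => exact ⟨0, fun s => by rw [zero_comp, (linear s).map_zero]⟩
  | add a b _ _ iha ihb =>
    obtain ⟨Ta, hTa⟩ := iha
    obtain ⟨Tb, hTb⟩ := ihb
    exact ⟨Ta + Tb, fun s => by rw [add_comp, hTa, hTb, (linear s).map_add]⟩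
  | smul r a _ iha =>
    obtain ⟨T, hT⟩ := iha
    exact ⟨r • T, fun s => by rw [smul_comp, hT, (linear s).map_smul]⟩

theorem exists_starAlgHom_comp_kerFun_eq (hκ : kernel 𝕂 = gramKernel κ)
    (hC : Submodule.span 𝕜 (unitary C : Set C) = ⊤)
    (hj : ∀ s t, IsLinearMap 𝕜 fun c => κ (s * j c * t)) :
    ∃ π : C →⋆ₐ[𝕜] (𝕂 →L[𝕜] 𝕂), ∀ c s, π c ∘L kerFun 𝕂 s = kerFun 𝕂 (j c * s) := by
  have linear := isLinearMap_kerFun_mul (𝕂 := 𝕂) hκ hj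
  choose T hT using exists_comp_kerFun_eq (𝕂 := 𝕂) hκ hC hj
  have map_mul (a b : C) : T (a * b) = T a * T b := eq_of_comp_kerFun_eq fun s => by
    rw [mul_def, comp_assoc, hT, hT, hT, _root_.map_mul, mul_assoc]
  have map_one : T 1 = 1 := eq_of_comp_kerFun_eq fun s => by
    rw [hT, _root_.map_one, one_mul, one_def, id_comp]
  have map_smul (r : 𝕜) (a : C) : T (r • a) = r • T a := eq_of_comp_kerFun_eq fun s => by
    rw [smul_comp, hT, hT, (linear s).map_smul]
  have map_add (a b : C) : T (a + b) = T a + T b := eq_of_comp_kerFun_eq fun s => by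
    rw [add_comp, hT, hT, hT, (linear s).map_add]
  have map_star (a : C) : T (star a) = star (T a) := by
    refine eq_of_comp_kerFun_eq fun t => ext fun v => RKHS.ext fun s => ?_
    have adjoint_comp_eq : adjoint (kerFun 𝕂 s) ∘L T (star a) ∘L kerFun 𝕂 t =
        adjoint (kerFun 𝕂 s) ∘L adjoint (T a) ∘L kerFun 𝕂 t := by
      rw [← comp_assoc _ (adjoint (T a)), ← adjoint_comp, hT, hT,
        adjoint_kerFun_comp_kerFun_of_kernel_eq hκ, adjoint_kerFun_comp_kerFun_of_kernel_eq hκ,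
        StarHomClass.map_star, star_mul, mul_assoc]
    rw [← adjoint_kerFun, ← adjoint_kerFun]
    exact congr($adjoint_comp_eq v)
  have map_zero : T 0 = 0 := by simpa using map_smul 0 0
  exact ⟨{ toFun := T, map_mul' := map_mul, map_one' := map_one, map_add' := map_add,
           map_zero' := map_zero, map_star' := map_star,
           commutes' := fun r => by
             simp only [Algebra.algebraMap_eq_smul_one, map_smul, map_one] }, hT⟩

end Dilation

section ProdInclusions

variable (M N : Type*) [Monoid M] [Monoid N]

/-- The inclusion `m ↦ (m, 1)` of a factor in the product `M × N`, as a `*`-monoid morphism. -/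
def starMonoidHomInl [Star M] [StarMul N] : M →⋆* M × N where
  __ := MonoidHom.inl M N
  map_star' _ := Prod.ext rfl (star_one N).symm

/-- The inclusion `n ↦ (1, n)` of a factor in the product `M × N`, as a `*`-monoid morphism. -/
def starMonoidHomInr [StarMul M] [Star N] : N →⋆* M × N where
  __ := MonoidHom.inr M N
  map_star' _ := Prod.ext (star_one M).symm rfl

variable {M N}

@[simp]
theorem starMonoidHomInl_apply [Star M] [StarMul N] (m : M) :
    starMonoidHomInl M N m = (m, 1) := rfl

@[simp]
theorem starMonoidHomInr_apply [StarMul M] [Star N] (n : N) :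
    starMonoidHomInr M N n = (1, n) := rfl

end ProdInclusions

section CommutingMaps

universe v w

variable {A : Type u} {B : Type v} [NormedRing A] [StarRing A] [CStarRing A] [CompleteSpace A]
  [NormedAlgebra ℂ A] [StarModule ℂ A] [NormedRing B] [StarRing B] [CStarRing B]
  [CompleteSpace B] [NormedAlgebra ℂ B] [StarModule ℂ B]
  {H : Type w} [NormedAddCommGroup H] [InnerProductSpace ℂ H] [CompleteSpace H]
  {φ : A →ₗ[ℂ] (H →L[ℂ] H)} {ψ : B →ₗ[ℂ] (H →L[ℂ] H)}

theorem IsCPMapCStar.posSemidef_gramKernel_prod (hφ : IsCPMapCStar φ) (hψ : IsCPMapCStar ψ)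
    (hcomm : ∀ a b, Commute (φ a) (ψ b)) :
    (gramKernel fun s : A × B => φ s.1 * ψ s.2).PosSemidef :=
  posSemidef_hadamard_of_commute (hφ.posSemidef_gramKernel.submatrix Prod.fst)
    (hψ.posSemidef_gramKernel.submatrix Prod.snd) fun _ _ _ _ => hcomm _ _

variable (A) in
theorem span_unitary_eq_top : Submodule.span ℂ (unitary A : Set A) = ⊤ :=
  let : CStarAlgebra A := {}
  CStarAlgebra.span_unitary A

theorem statement15_general (hφ : IsCPMapCStar φ) (hψ : IsCPMapCStar ψ)
    (hcomm : ∀ a b, Commute (φ a) (ψ b)) :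
    ∃ (𝕂 : HilbertC.{max u v w}) (V : H →L[ℂ] 𝕂.carrier)
      (π : A →⋆ₐ[ℂ] (𝕂.carrier →L[ℂ] 𝕂.carrier)) (ρ : B →⋆ₐ[ℂ] (𝕂.carrier →L[ℂ] 𝕂.carrier)),
      (∀ a b, Commute (π a) (ρ b)) ∧
      ∀ a b, φ a ∘L ψ b = adjoint V ∘L π a ∘L ρ b ∘L V := by
  let κ (s : A × B) : H →L[ℂ] H := φ s.1 * ψ s.2
  have : Fact (gramKernel κ).PosSemidef := ⟨hφ.posSemidef_gramKernel_prod hψ hcomm⟩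
  let 𝕂 := RKHS.OfKernel (gramKernel κ)
  have hκ : RKHS.kernel 𝕂 = gramKernel κ := RKHS.OfKernel.kernel_ofKernel
  have linear_inl (s t : A × B) : IsLinearMap ℂ fun a => κ (s * starMonoidHomInl A B a * t) := by
    constructor <;> simp [κ, mul_add, add_mul]
  have linear_inr (s t : A × B) : IsLinearMap ℂ fun b => κ (s * starMonoidHomInr A B b * t) := by
    constructor <;> simp [κ, mul_add, add_mul]
  obtain ⟨π, hπ⟩ := exists_starAlgHom_comp_kerFun_eq hκ (span_unitary_eq_top A) linear_inl
  obtain ⟨ρ, hρ⟩ := exists_starAlgHom_comp_kerFun_eq hκ (span_unitary_eq_top B) linear_inr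
  refine ⟨⟨𝕂⟩, RKHS.kerFun 𝕂 1, π, ρ, fun a b => eq_of_comp_kerFun_eq fun s => ?_, fun a b => ?_⟩
  · rw [mul_def, mul_def, comp_assoc, comp_assoc, hρ, hπ, hπ, hρ, ← mul_assoc, ← mul_assoc]
    simp
  · rw [hρ, hπ, adjoint_kerFun_comp_kerFun_of_kernel_eq hκ]
    simp [κ, mul_def]

end CommutingMaps

/-- Commuting unital completely positive maps dilate simultaneously
to commuting unital *-representations on a common Hilbert space. -/
theorem statement15
    {A B : Type u}
    [NormedRing A] [StarRing A] [CStarRing A] [CompleteSpace A]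
    [NormedAlgebra ℂ A] [StarModule ℂ A]
    [NormedRing B] [StarRing B] [CStarRing B] [CompleteSpace B]
    [NormedAlgebra ℂ B] [StarModule ℂ B]
    {H : Type u} [NormedAddCommGroup H] [InnerProductSpace ℂ H] [CompleteSpace H]
    (φ : A →ₗ[ℂ] (H →L[ℂ] H)) (ψ : B →ₗ[ℂ] (H →L[ℂ] H))
    (hφcp : IsCPMapCStar φ) (hψcp : IsCPMapCStar ψ)
    (hφ1 : φ 1 = 1) (hψ1 : ψ 1 = 1)
    (hcomm : ∀ (a : A) (b : B), Commute (φ a) (ψ b)) :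
    ∃ (𝕂 : HilbertC.{u}) (V : H →L[ℂ] 𝕂.carrier)
      (π : A →⋆ₐ[ℂ] (𝕂.carrier →L[ℂ] 𝕂.carrier))
      (ρ : B →⋆ₐ[ℂ] (𝕂.carrier →L[ℂ] 𝕂.carrier)),
      (∀ ξ : H, ‖V ξ‖ = ‖ξ‖) ∧
      (∀ (a : A) (b : B), Commute (π a) (ρ b)) ∧
      (∀ (a : A) (b : B),
        (φ a) ∘L (ψ b) = (adjoint V) ∘L (π a) ∘L (ρ b) ∘L V) := by
  obtain ⟨𝕂, V, π, ρ, hπρ, hV⟩ := statement15_general hφcp hψcp hcomm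
  have adjoint_comp_self : adjoint V ∘L V = 1 := by simpa [hφ1, hψ1, one_def] using (hV 1 1).symm
  exact ⟨𝕂, V, π, ρ, V.norm_map_iff_adjoint_comp_self.mpr adjoint_comp_self, hπρ, hV⟩
end

section
/- Let m, n ≥ 1, let ξ ∈ ℂ^m and η ∈ ℂ^n be unit vectors, and let σ be a density operator on ℂ^m ⊗ ℂ^n. Then sup_{Γ∈Q_loc} Tr(Γ(ξξ* ⊗ ηη*) σ), where Q_loc is the set of local QNS correlations over ([m],[n],[m],[n]), equals sup { Tr(ρσ) : ρ a separable density operator on ℂ^m ⊗ ℂ^n }, where a density operator is separable if it is a convex combination of tensor products ρ₁ ⊗ ρ₂ of density operators on ℂ^m and ℂ^n. Moreover, if σ is not separable, then this common value is strictly less than 1. -/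
open Matrix
open scoped Kronecker ComplexOrder

/-- The amplification `id_{M_m} ⊗ Φ` of a linear map `Φ : M_X → M_A`. -/
def matAmpl {X A : Type*} (m : ℕ)
    (Φ : Matrix X X ℂ →ₗ[ℂ] Matrix A A ℂ)
    (M : Matrix (Fin m × X) (Fin m × X) ℂ) :
    Matrix (Fin m × A) (Fin m × A) ℂ :=
  Matrix.of fun p q => Φ (Matrix.of fun x x' => M (p.1, x) (q.1, x')) p.2 q.2

/-- Complete positivity of a linear map `Φ : M_X → M_A`. -/
def IsCPMap {X A : Type*} [Fintype X] [Fintype A]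
    (Φ : Matrix X X ℂ →ₗ[ℂ] Matrix A A ℂ) : Prop :=
  ∀ (m : ℕ) (M : Matrix (Fin m × X) (Fin m × X) ℂ),
    M.PosSemidef → (matAmpl m Φ M).PosSemidef

/-- A quantum channel is a completely positive trace-preserving linear map. -/
def IsQChannel {X A : Type*} [Fintype X] [Fintype A]
    (Φ : Matrix X X ℂ →ₗ[ℂ] Matrix A A ℂ) : Prop :=
  IsCPMap Φ ∧ ∀ M : Matrix X X ℂ, (Φ M).trace = M.trace

/-- Local QNS correlations: convex combinations of tensor products of quantum
channels (on product matrices). -/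
def IsLocalCorrelation {X Y A B : Type} [Fintype X] [Fintype Y] [Fintype A] [Fintype B]
    (Γ : Matrix (X × Y) (X × Y) ℂ →ₗ[ℂ] Matrix (A × B) (A × B) ℂ) : Prop :=
  ∃ (k : ℕ)
    (Φ : Fin k → (Matrix X X ℂ →ₗ[ℂ] Matrix A A ℂ))
    (Ψ : Fin k → (Matrix Y Y ℂ →ₗ[ℂ] Matrix B B ℂ))
    (lam : Fin k → ℝ),
    (∀ i, IsQChannel (Φ i)) ∧ (∀ i, IsQChannel (Ψ i)) ∧
    (∀ i, 0 ≤ lam i) ∧ (∑ i, lam i = 1) ∧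
    (∀ (ρ : Matrix X X ℂ) (τ : Matrix Y Y ℂ),
      Γ (ρ ⊗ₖ τ) = ∑ i, (lam i : ℂ) • ((Φ i ρ) ⊗ₖ (Ψ i τ)))

/-- Separable density operators on `ℂ^m ⊗ ℂ^n`. -/
def IsSeparableDensity {m n : ℕ}
    (ρ : Matrix (Fin m × Fin n) (Fin m × Fin n) ℂ) : Prop :=
  ∃ (k : ℕ)
    (ρ₁ : Fin k → Matrix (Fin m) (Fin m) ℂ)
    (ρ₂ : Fin k → Matrix (Fin n) (Fin n) ℂ)
    (lam : Fin k → ℝ),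
    (∀ i, (ρ₁ i).PosSemidef ∧ (ρ₁ i).trace = 1) ∧
    (∀ i, (ρ₂ i).PosSemidef ∧ (ρ₂ i).trace = 1) ∧
    (∀ i, 0 ≤ lam i) ∧ (∑ i, lam i = 1) ∧
    ρ = ∑ i, (lam i : ℂ) • ((ρ₁ i) ⊗ₖ (ρ₂ i))

/-!
A product of channels maps the product state `ω₁ ⊗ ω₂` to a product state, so a local correlation
maps it to a separable one. Conversely, every separable `ρ` is attained by the local correlation
`M ↦ Tr(M) ρ`, a mixture of products of replacement channels. This identifies the two value sets.

For the strict bound, a density operator satisfies `Tr(ρ²) ≤ Tr(ρ)² = 1`, so expanding the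
Hilbert–Schmidt distance gives `‖ρ - σ‖² ≤ 2 - 2 Tr(ρσ)`, whence `Tr(ρσ) < 1` unless `ρ = σ`. If `σ`
is entangled, this applies to all product states `ρ`. These form a compact set, hence obey a uniform
bound `c < 1`, which passes to convex combinations by linearity.
-/

section PosSemidef

variable {𝕜 X : Type*} [RCLike 𝕜]

lemma norm_apply_sq_le_of_posSemidef {M : Matrix X X 𝕜} (hM : M.PosSemidef) (i j : X) :
    ‖M i j‖ ^ 2 ≤ RCLike.re (M i i) * RCLike.re (M j j) := by
  have minor_nonneg : 0 ≤ M i i * M j j - M i j * M j i := by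
    have det_nonneg := (hM.submatrix ![i, j]).det_nonneg
    rwa [det_fin_two] at det_nonneg
  have offDiag_mul : M i j * M j i = ((‖M i j‖ ^ 2 : ℝ) : 𝕜) := by
    rw [← hM.isHermitian.apply j i, RCLike.star_def, RCLike.mul_conj, RCLike.ofReal_pow]
  have diag_mul : M i i * M j j = ((RCLike.re (M i i) * RCLike.re (M j j) : ℝ) : 𝕜) := by
    rw [RCLike.ofReal_mul, hM.isHermitian.coe_re_apply_self, hM.isHermitian.coe_re_apply_self]
  rw [offDiag_mul, diag_mul, ← RCLike.ofReal_sub, RCLike.ofReal_nonneg] at minor_nonneg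
  exact sub_nonneg.mp minor_nonneg

lemma re_trace_mul_self_le_sq_of_posSemidef [Fintype X] {M : Matrix X X 𝕜} (hM : M.PosSemidef) :
    RCLike.re (M * M).trace ≤ RCLike.re M.trace ^ 2 := by
  have apply_mul_apply (i j : X) : RCLike.re (M i j * M j i) = ‖M i j‖ ^ 2 := by
    rw [← hM.isHermitian.apply j i, RCLike.star_def, RCLike.mul_conj, ← RCLike.ofReal_pow,
      RCLike.ofReal_re]
  calc RCLike.re (M * M).trace
      = ∑ i, ∑ j, ‖M i j‖ ^ 2 := by
        simp only [trace, diag_apply, mul_apply, map_sum, apply_mul_apply]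
    _ ≤ ∑ i, ∑ j, RCLike.re (M i i) * RCLike.re (M j j) := by
        gcongr with i _ j _
        exact norm_apply_sq_le_of_posSemidef hM i j
    _ = RCLike.re M.trace ^ 2 := by
        rw [← Finset.sum_mul_sum, ← sq, trace, map_sum]
        rfl

lemma isClosed_setOf_posSemidef [Finite X] : IsClosed {M : Matrix X X 𝕜 | M.PosSemidef} := by
  have := Fintype.ofFinite X
  simp only [posSemidef_iff_dotProduct_mulVec, IsHermitian, Set.ofPred_and, Set.ofPred_forall]
  exact (isClosed_eq (by fun_prop) (by fun_prop)).inter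
    (isClosed_iInter fun x => isClosed_le (by fun_prop) (by fun_prop))

end PosSemidef

section Density

variable {X Y : Type*} [Fintype X] [Fintype Y]

/-- Density operators on `ℂ^X`: positive semidefinite matrices of trace one. -/
def IsDensity (ρ : Matrix X X ℂ) : Prop :=
  ρ.PosSemidef ∧ ρ.trace = 1

lemma isDensity_vecMulVec_star {ξ : X → ℂ} (hξ : ∑ i, ‖ξ i‖ ^ 2 = 1) :
    IsDensity (vecMulVec ξ (star ξ)) := by
  refine ⟨posSemidef_vecMulVec_self_star ξ, ?_⟩
  calc (vecMulVec ξ (star ξ)).trace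
      = ((∑ i, ‖ξ i‖ ^ 2 : ℝ) : ℂ) := by
        simp [trace_vecMulVec, dotProduct, Complex.mul_conj']
    _ = 1 := by rw [hξ, Complex.ofReal_one]

namespace IsDensity

lemma kronecker {ρ : Matrix X X ℂ} {τ : Matrix Y Y ℂ} (hρ : IsDensity ρ) (hτ : IsDensity τ) :
    IsDensity (ρ ⊗ₖ τ) :=
  ⟨hρ.1.kronecker hτ.1, by rw [trace_kronecker, hρ.2, hτ.2, one_mul]⟩

lemma re_trace_mul_self_le_one {ρ : Matrix X X ℂ} (hρ : IsDensity ρ) :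
    (ρ * ρ).trace.re ≤ 1 := by
  simpa [hρ.2] using re_trace_mul_self_le_sq_of_posSemidef hρ.1

lemma re_trace_mul_lt_one {ρ σ : Matrix X X ℂ} (hρ : IsDensity ρ) (hσ : IsDensity σ)
    (hne : ρ ≠ σ) : (ρ * σ).trace.re < 1 := by
  have hilbertSchmidt_pos : 0 < ((ρ - σ)ᴴ * (ρ - σ)).trace :=
    (posSemidef_conjTranspose_mul_self _).trace_nonneg.lt_of_ne'
      (trace_conjTranspose_mul_self_eq_zero_iff.not.mpr (sub_ne_zero.mpr hne))
  have expand : ((ρ - σ)ᴴ * (ρ - σ)).trace =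
      (ρ * ρ).trace + (σ * σ).trace - 2 * (ρ * σ).trace := by
    rw [(hρ.1.isHermitian.sub hσ.1.isHermitian).eq, sub_mul, mul_sub, mul_sub, trace_sub,
      trace_sub, trace_sub, trace_mul_comm σ ρ]
    ring
  have re_pos : 0 < (ρ * ρ).trace.re + (σ * σ).trace.re - 2 * (ρ * σ).trace.re := by
    rw [expand] at hilbertSchmidt_pos
    simpa using (Complex.pos_iff.mp hilbertSchmidt_pos).1
  linarith [hρ.re_trace_mul_self_le_one, hσ.re_trace_mul_self_le_one]

lemma re_apply_self_le_one {ρ : Matrix X X ℂ} (hρ : IsDensity ρ) (i : X) : (ρ i i).re ≤ 1 :=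
  calc (ρ i i).re ≤ ∑ j, (ρ j j).re :=
        Finset.single_le_sum (f := fun j => (ρ j j).re)
          (fun _ _ => (Complex.nonneg_iff.mp hρ.1.diag_nonneg).1) (Finset.mem_univ i)
    _ = ρ.trace.re := (Complex.re_sum _ _).symm
    _ = 1 := by rw [hρ.2, Complex.one_re]

lemma norm_apply_le_one {ρ : Matrix X X ℂ} (hρ : IsDensity ρ) (i j : X) : ‖ρ i j‖ ≤ 1 := by
  have diag_re_nonneg : 0 ≤ (ρ j j).re := (Complex.nonneg_iff.mp hρ.1.diag_nonneg).1
  have norm_sq_le_one : ‖ρ i j‖ ^ 2 ≤ 1 :=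
    (norm_apply_sq_le_of_posSemidef hρ.1 i j).trans
      (mul_le_one₀ (hρ.re_apply_self_le_one i) diag_re_nonneg (hρ.re_apply_self_le_one j))
  exact (sq_le_one_iff₀ (norm_nonneg _)).mp norm_sq_le_one

end IsDensity

lemma isCompact_setOf_isDensity : IsCompact {ρ : Matrix X X ℂ | IsDensity ρ} := by
  have entries_compact : IsCompact {ρ : Matrix X X ℂ | ∀ i j, ρ i j ∈ Metric.closedBall 0 1} :=
    isCompact_pi_infinite fun _ => isCompact_pi_infinite fun _ => isCompact_closedBall 0 1
  refine entries_compact.of_isClosed_subset ?_ fun ρ hρ i j =>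
    mem_closedBall_zero_iff.mpr (hρ.norm_apply_le_one i j)
  exact isClosed_setOf_posSemidef.inter (isClosed_eq (by fun_prop) continuous_const)

lemma exists_lt_one_forall_re_trace_kronecker_mul_le {σ : Matrix (X × Y) (X × Y) ℂ}
    (hσ : IsDensity σ) (hne : ∀ ρ₁ ρ₂, IsDensity ρ₁ → IsDensity ρ₂ → ρ₁ ⊗ₖ ρ₂ ≠ σ) :
    ∃ c < 1, ∀ ρ₁ ρ₂, IsDensity ρ₁ → IsDensity ρ₂ → ((ρ₁ ⊗ₖ ρ₂) * σ).trace.re ≤ c := by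
  have overlap_continuous : Continuous fun p : Matrix X X ℂ × Matrix Y Y ℂ =>
      ((p.1 ⊗ₖ p.2) * σ).trace.re := by
    have kronecker_continuous : Continuous fun p : Matrix X X ℂ × Matrix Y Y ℂ => p.1 ⊗ₖ p.2 :=
      continuous_matrix fun i j =>
        (continuous_fst.matrix_elem i.1 j.1).mul (continuous_snd.matrix_elem i.2 j.2)
    fun_prop
  obtain ⟨c, hc, hle⟩ :=
    (isCompact_setOf_isDensity.prod isCompact_setOf_isDensity).exists_forall_le' (α := ℝᵒᵈ)
      overlap_continuous.continuousOn
      fun p hp => (hp.1.kronecker hp.2).re_trace_mul_lt_one hσ (hne p.1 p.2 hp.1 hp.2)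
  exact ⟨c, hc, fun ρ₁ ρ₂ h₁ h₂ => hle (ρ₁, ρ₂) ⟨h₁, h₂⟩⟩

end Density

section Channel

variable {X A : Type*} [Fintype X]

/-- The replacement channel `M ↦ Tr(M) ρ`, which discards its input and prepares `ρ`. -/
def replacementChannel (ρ : Matrix A A ℂ) : Matrix X X ℂ →ₗ[ℂ] Matrix A A ℂ :=
  (traceLinearMap X ℂ ℂ).smulRight ρ

lemma replacementChannel_apply (ρ : Matrix A A ℂ) (M : Matrix X X ℂ) :
    replacementChannel ρ M = M.trace • ρ :=
  rfl

lemma matAmpl_replacementChannel (ρ : Matrix A A ℂ) (k : ℕ)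
    (M : Matrix (Fin k × X) (Fin k × X) ℂ) :
    matAmpl k (replacementChannel ρ) M = (∑ x, M.submatrix (·, x) (·, x)) ⊗ₖ ρ := by
  ext p q
  simp [matAmpl, replacementChannel_apply, trace, Matrix.sum_apply]

variable [Fintype A]

lemma isQChannel_replacementChannel {ρ : Matrix A A ℂ} (hρ : IsDensity ρ) :
    IsQChannel (replacementChannel ρ : Matrix X X ℂ →ₗ[ℂ] Matrix A A ℂ) := by
  refine ⟨fun k M hM => ?_, fun M => ?_⟩
  · rw [matAmpl_replacementChannel]
    exact (posSemidef_sum _ fun x _ => hM.submatrix (·, x)).kronecker hρ.1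
  · rw [replacementChannel_apply, trace_smul, hρ.2, smul_eq_mul, mul_one]

lemma IsCPMap.posSemidef_apply {Φ : Matrix X X ℂ →ₗ[ℂ] Matrix A A ℂ} (hΦ : IsCPMap Φ)
    {M : Matrix X X ℂ} (hM : M.PosSemidef) : (Φ M).PosSemidef :=
  (hΦ 1 (M.submatrix Prod.snd Prod.snd) (hM.submatrix _)).submatrix (Prod.mk 0)

lemma IsQChannel.isDensity_apply {Φ : Matrix X X ℂ →ₗ[ℂ] Matrix A A ℂ} (hΦ : IsQChannel Φ)
    {ρ : Matrix X X ℂ} (hρ : IsDensity ρ) : IsDensity (Φ ρ) :=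
  ⟨hΦ.1.posSemidef_apply hρ.1, (hΦ.2 ρ).trans hρ.2⟩

end Channel

section Separable

variable {m n : ℕ}

lemma IsDensity.isSeparableDensity_kronecker {ρ₁ : Matrix (Fin m) (Fin m) ℂ}
    {ρ₂ : Matrix (Fin n) (Fin n) ℂ} (h₁ : IsDensity ρ₁) (h₂ : IsDensity ρ₂) :
    IsSeparableDensity (ρ₁ ⊗ₖ ρ₂) :=
  ⟨1, fun _ => ρ₁, fun _ => ρ₂, fun _ => 1, fun _ => h₁, fun _ => h₂, fun _ => zero_le_one,
    by simp, by simp⟩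

lemma IsSeparableDensity.re_trace_mul_le {ρ σ : Matrix (Fin m × Fin n) (Fin m × Fin n) ℂ} {c : ℝ}
    (hρ : IsSeparableDensity ρ)
    (hc : ∀ ρ₁ ρ₂, IsDensity ρ₁ → IsDensity ρ₂ → ((ρ₁ ⊗ₖ ρ₂) * σ).trace.re ≤ c) :
    (ρ * σ).trace.re ≤ c := by
  obtain ⟨k, ρ₁, ρ₂, lam, h₁, h₂, lam_nonneg, lam_sum, rfl⟩ := hρ
  calc ((∑ i, (lam i : ℂ) • (ρ₁ i ⊗ₖ ρ₂ i)) * σ).trace.re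
      = ∑ i, lam i * ((ρ₁ i ⊗ₖ ρ₂ i) * σ).trace.re := by
        simp only [Finset.sum_mul, trace_sum, Complex.re_sum, smul_mul_assoc, trace_smul,
          smul_eq_mul, Complex.re_ofReal_mul]
    _ ≤ ∑ i, lam i * c := by
        gcongr with i
        · exact lam_nonneg i
        · exact hc _ _ (h₁ i) (h₂ i)
    _ = c := by rw [← Finset.sum_mul, lam_sum, one_mul]

lemma sSup_trace_mul_isSeparableDensity_lt_one
    {σ : Matrix (Fin m × Fin n) (Fin m × Fin n) ℂ} (hσ : IsDensity σ)
    (hsep : ¬ IsSeparableDensity σ) :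
    sSup {t : ℝ | ∃ ρ : Matrix (Fin m × Fin n) (Fin m × Fin n) ℂ,
      IsSeparableDensity ρ ∧ (t : ℂ) = trace (ρ * σ)} < 1 := by
  obtain ⟨c, hc, hprod⟩ := exists_lt_one_forall_re_trace_kronecker_mul_le hσ
    fun ρ₁ ρ₂ h₁ h₂ heq => hsep (heq ▸ h₁.isSeparableDensity_kronecker h₂)
  refine (Real.sSup_le ?_ (le_max_right c 0)).trans_lt (max_lt hc one_pos)
  rintro t ⟨ρ, hρ, ht⟩
  calc t = (ρ * σ).trace.re := by rw [← ht, Complex.ofReal_re]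
    _ ≤ c := hρ.re_trace_mul_le hprod
    _ ≤ max c 0 := le_max_left c 0

end Separable

section LocalCorrelation

variable {X Y : Type} [Fintype X] [Fintype Y] {m n : ℕ}

lemma IsLocalCorrelation.isSeparableDensity_apply_kronecker
    {Γ : Matrix (X × Y) (X × Y) ℂ →ₗ[ℂ] Matrix (Fin m × Fin n) (Fin m × Fin n) ℂ}
    (hΓ : IsLocalCorrelation Γ) {ω₁ : Matrix X X ℂ} {ω₂ : Matrix Y Y ℂ}
    (hω₁ : IsDensity ω₁) (hω₂ : IsDensity ω₂) : IsSeparableDensity (Γ (ω₁ ⊗ₖ ω₂)) := by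
  obtain ⟨k, Φ, Ψ, lam, hΦ, hΨ, lam_nonneg, lam_sum, hΓ⟩ := hΓ
  exact ⟨k, fun i => Φ i ω₁, fun i => Ψ i ω₂, lam, fun i => (hΦ i).isDensity_apply hω₁,
    fun i => (hΨ i).isDensity_apply hω₂, lam_nonneg, lam_sum, hΓ ω₁ ω₂⟩

lemma IsSeparableDensity.isLocalCorrelation_replacementChannel
    {ρ : Matrix (Fin m × Fin n) (Fin m × Fin n) ℂ} (hρ : IsSeparableDensity ρ) :
    IsLocalCorrelation (replacementChannel ρ : Matrix (X × Y) (X × Y) ℂ →ₗ[ℂ] _) := by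
  obtain ⟨k, ρ₁, ρ₂, lam, h₁, h₂, lam_nonneg, lam_sum, rfl⟩ := hρ
  refine ⟨k, fun i => replacementChannel (ρ₁ i), fun i => replacementChannel (ρ₂ i), lam,
    fun i => isQChannel_replacementChannel (h₁ i), fun i => isQChannel_replacementChannel (h₂ i),
    lam_nonneg, lam_sum, fun ω τ => ?_⟩
  simp only [replacementChannel_apply, trace_kronecker, Finset.smul_sum, smul_kronecker,
    kronecker_smul, smul_smul, mul_comm]

lemma exists_isLocalCorrelation_apply_kronecker_eq_iff {ω₁ : Matrix X X ℂ} {ω₂ : Matrix Y Y ℂ}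
    (hω₁ : IsDensity ω₁) (hω₂ : IsDensity ω₂)
    {ρ : Matrix (Fin m × Fin n) (Fin m × Fin n) ℂ} :
    (∃ Γ : Matrix (X × Y) (X × Y) ℂ →ₗ[ℂ] Matrix (Fin m × Fin n) (Fin m × Fin n) ℂ,
      IsLocalCorrelation Γ ∧ Γ (ω₁ ⊗ₖ ω₂) = ρ) ↔ IsSeparableDensity ρ := by
  constructor
  · rintro ⟨Γ, hΓ, rfl⟩
    exact hΓ.isSeparableDensity_apply_kronecker hω₁ hω₂
  · intro hρ
    refine ⟨replacementChannel ρ, hρ.isLocalCorrelation_replacementChannel, ?_⟩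
    rw [replacementChannel_apply, (hω₁.kronecker hω₂).2, one_smul]

theorem statement17_general {ω₁ : Matrix X X ℂ} {ω₂ : Matrix Y Y ℂ}
    (hω₁ : IsDensity ω₁) (hω₂ : IsDensity ω₂)
    {σ : Matrix (Fin m × Fin n) (Fin m × Fin n) ℂ} (hσ : IsDensity σ) :
    (sSup {t : ℝ | ∃ Γ : Matrix (X × Y) (X × Y) ℂ →ₗ[ℂ]
          Matrix (Fin m × Fin n) (Fin m × Fin n) ℂ,
        IsLocalCorrelation Γ ∧ (t : ℂ) = trace (Γ (ω₁ ⊗ₖ ω₂) * σ)}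
      = sSup {t : ℝ | ∃ ρ : Matrix (Fin m × Fin n) (Fin m × Fin n) ℂ,
          IsSeparableDensity ρ ∧ (t : ℂ) = trace (ρ * σ)}) ∧
    (¬ IsSeparableDensity σ →
      sSup {t : ℝ | ∃ ρ : Matrix (Fin m × Fin n) (Fin m × Fin n) ℂ,
          IsSeparableDensity ρ ∧ (t : ℂ) = trace (ρ * σ)} < 1) := by
  refine ⟨congrArg sSup (Set.ext fun t => ?_), sSup_trace_mul_isSeparableDensity_lt_one hσ⟩
  simp only [Set.mem_ofPred_eq, ← exists_isLocalCorrelation_apply_kronecker_eq_iff hω₁ hω₂]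
  exact ⟨fun ⟨Γ, hΓ, ht⟩ => ⟨_, ⟨Γ, hΓ, rfl⟩, ht⟩, fun ⟨_, ⟨Γ, hΓ, rfl⟩, ht⟩ => ⟨Γ, hΓ, ht⟩⟩

end LocalCorrelation

/-- The local value of the game `(ξ ⊗ η, σ)` equals the maximal
overlap of `σ` with separable states; it is `< 1` when `σ` is entangled. -/
theorem statement17
    (m n : ℕ) (hm : 1 ≤ m) (hn : 1 ≤ n)
    (ξ : Fin m → ℂ) (hξ : ∑ i, ‖ξ i‖ ^ 2 = 1)
    (η : Fin n → ℂ) (hη : ∑ j, ‖η j‖ ^ 2 = 1)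
    (σ : Matrix (Fin m × Fin n) (Fin m × Fin n) ℂ)
    (hσ : σ.PosSemidef ∧ σ.trace = 1) :
    (sSup {t : ℝ | ∃ Γ : Matrix (Fin m × Fin n) (Fin m × Fin n) ℂ →ₗ[ℂ]
          Matrix (Fin m × Fin n) (Fin m × Fin n) ℂ,
        IsLocalCorrelation Γ ∧
        (t : ℂ) = Matrix.trace
          (Γ ((Matrix.vecMulVec ξ (star ξ)) ⊗ₖ (Matrix.vecMulVec η (star η))) * σ)}
      = sSup {t : ℝ | ∃ ρ : Matrix (Fin m × Fin n) (Fin m × Fin n) ℂ,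
          IsSeparableDensity ρ ∧ (t : ℂ) = Matrix.trace (ρ * σ)}) ∧
    (¬ IsSeparableDensity σ →
      sSup {t : ℝ | ∃ ρ : Matrix (Fin m × Fin n) (Fin m × Fin n) ℂ,
          IsSeparableDensity ρ ∧ (t : ℂ) = Matrix.trace (ρ * σ)} < 1) :=
  statement17_general (isDensity_vecMulVec_star hξ) (isDensity_vecMulVec_star hη) hσ
end

section
/- Let m, n ≥ 1, let ξ ∈ ℂ^m and η ∈ ℂ^n be unit vectors, and let σ be a density operator on ℂ^m ⊗ ℂ^n. Then there exist finite-dimensional complex Hilbert spaces H_A, K_A, H_B, K_B, a block operator isometry U = (U_{a,x})_{a,x∈[m]} with entries in B(H_A,K_A), a block operator isometry V = (V_{b,y})_{b,y∈[n]} with entries in B(H_B,K_B), and a density operator σ₀ on H_A ⊗ H_B, such that the linear map Γ : M_{[m]×[n]} → M_{[m]×[n]} defined by Γ(ε_{x,x'} ⊗ ε_{y,y'}) = Σ_{a,a',b,b'} Tr(σ₀ (U_{a,x}* U_{a',x'} ⊗ V_{b,y}* V_{b',y'})) ε_{a,a'} ⊗ ε_{b,b'} satisfies Γ(ξξ* ⊗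 ηη*) = σ. In particular, every state on ℂ^m ⊗ ℂ^n can be produced from any pure product state by a QNS correlation of quantum type. -/
open Matrix
open scoped Kronecker ComplexOrder

/-- A block operator isometry over `(X, A)` with finite-dimensional entries,
given as a family of `k × d` matrices. -/
def IsBlockIsometryFam {X A : Type*} [Fintype A] [DecidableEq X]
    {d k : ℕ} (U : A → X → Matrix (Fin k) (Fin d) ℂ) : Prop :=
  ∀ x x' : X, ∑ a : A, (U a x)ᴴ * (U a x') = if x = x' then 1 else 0

/-!
Let `U_{a,x} = ε_{x,a}` and `V_{b,y} = ε_{y,b}`. Then `U_{a,x}* U_{a',x'} = δ_{x,x'} ε_{a,a'}`: the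
input index only survives through `δ_{x,x'}`, which turns the input into its trace, while the
output entries are those of the transpose of the shared state. The resulting correlation is the
replacement channel `ω ↦ Tr(ω) σ` when the shared state is `σᵀ`, whatever the input.
-/

section SwapBlocks

variable {X A H K : Type*} [DecidableEq H] [DecidableEq K]

/-- The flip `ℂ^X ⊗ ℂ^A → ℂ^A ⊗ ℂ^X` as a family of blocks: the block at `(a, x)` is the matrix
unit `ε_{x,a}`. The maps `e` and `f` relabel the indices `x` and `a`, because the entries of
`IsBlockIsometryFam` are indexed by `Fin k` and `Fin d`. -/
def swapBlocks (e : X → K) (f : A → H) (a : A) (x : X) : Matrix K H ℂ :=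
  single (e x) (f a) 1

variable [DecidableEq X]

theorem conjTranspose_swapBlocks_mul_swapBlocks [Fintype K] {e : X → K}
    (he : Function.Injective e) (f : A → H) (a a' : A) (x x' : X) :
    (swapBlocks e f a x)ᴴ * swapBlocks e f a' x' =
      if x = x' then single (f a) (f a') 1 else 0 := by
  rw [swapBlocks, swapBlocks, conjTranspose_single]
  split_ifs with hx
  · simp [hx]
  · exact single_mul_single_of_ne _ _ _ _ (he.ne hx) _

theorem isBlockIsometryFam_swapBlocks [Fintype A] {d k : ℕ} {e : X → Fin k}
    (he : Function.Injective e) (f : A ≃ Fin d) : IsBlockIsometryFam (swapBlocks e f) := by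
  intro x x'
  simp only [conjTranspose_swapBlocks_mul_swapBlocks he]
  split_ifs
  · rw [f.sum_comp fun i => single i i (1 : ℂ), sum_single_one]
  · exact Finset.sum_const_zero

theorem trace_mul_swapBlocks_kronecker_swapBlocks {Y B H' K' : Type*} [DecidableEq Y]
    [DecidableEq H'] [DecidableEq K'] [Fintype H] [Fintype K] [Fintype H'] [Fintype K']
    {e : X → K} (he : Function.Injective e) (f : A → H)
    {e' : Y → K'} (he' : Function.Injective e') (f' : B → H') (σ₀ : Matrix (H × H') (H × H') ℂ)
    (a a' : A) (b b' : B) (x x' : X) (y y' : Y) :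
    trace (σ₀ * (((swapBlocks e f a x)ᴴ * swapBlocks e f a' x') ⊗ₖ
        ((swapBlocks e' f' b y)ᴴ * swapBlocks e' f' b' y'))) =
      if x = x' then if y = y' then σ₀ (f a', f' b') (f a, f' b) else 0 else 0 := by
  rw [conjTranspose_swapBlocks_mul_swapBlocks he, conjTranspose_swapBlocks_mul_swapBlocks he']
  split_ifs
  · rw [single_kronecker_single, trace_mul_single]
    simp
  all_goals simp

end SwapBlocks

section QNSCorrelation

variable {X A Y B H K H' K' : Type*} [Fintype X] [Fintype Y]
  [Fintype H] [Fintype K] [Fintype H'] [Fintype K']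

/-- The linear map `Γ` of quantum type given by block operators `U`, `V` and a shared state `σ₀`,
that is, `Γ(ε_{x,x'} ⊗ ε_{y,y'})` has `((a, b), (a', b'))` entry
`Tr(σ₀ (U_{a,x}* U_{a',x'} ⊗ V_{b,y}* V_{b',y'}))`. It is a QNS correlation when `U` and `V` are
block operator isometries and `σ₀` is a density operator. -/
def qnsCorrelation (U : A → X → Matrix K H ℂ) (V : B → Y → Matrix K' H' ℂ)
    (σ₀ : Matrix (H × H') (H × H') ℂ) :
    Matrix (X × Y) (X × Y) ℂ →ₗ[ℂ] Matrix (A × B) (A × B) ℂ where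
  toFun ω := of fun p q => ∑ x, ∑ x', ∑ y, ∑ y', ω (x, y) (x', y') *
    trace (σ₀ * (((U p.1 x)ᴴ * U q.1 x') ⊗ₖ ((V p.2 y)ᴴ * V q.2 y')))
  map_add' ω ω' := by
    ext
    simp [add_mul, Finset.sum_add_distrib]
  map_smul' c ω := by
    ext
    simp [mul_assoc, Finset.mul_sum]

theorem qnsCorrelation_apply (U : A → X → Matrix K H ℂ) (V : B → Y → Matrix K' H' ℂ)
    (σ₀ : Matrix (H × H') (H × H') ℂ) (ω : Matrix (X × Y) (X × Y) ℂ) (a a' : A) (b b' : B) :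
    qnsCorrelation U V σ₀ ω (a, b) (a', b') = ∑ x, ∑ x', ∑ y, ∑ y', ω (x, y) (x', y') *
      trace (σ₀ * (((U a x)ᴴ * U a' x') ⊗ₖ ((V b y)ᴴ * V b' y'))) :=
  rfl

theorem qnsCorrelation_vecMulVec_kronecker_apply (U : A → X → Matrix K H ℂ)
    (V : B → Y → Matrix K' H' ℂ) (σ₀ : Matrix (H × H') (H × H') ℂ) (ξ : X → ℂ) (η : Y → ℂ)
    (a a' : A) (b b' : B) :
    qnsCorrelation U V σ₀ (vecMulVec ξ (star ξ) ⊗ₖ vecMulVec η (star η)) (a, b) (a', b') =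
      ∑ x, ∑ x', ∑ y, ∑ y',
        ξ x * (starRingEnd ℂ) (ξ x') * η y * (starRingEnd ℂ) (η y') *
          trace (σ₀ * (((U a x)ᴴ * U a' x') ⊗ₖ ((V b y)ᴴ * V b' y'))) := by
  simp [qnsCorrelation_apply, vecMulVec_apply, mul_assoc]

theorem qnsCorrelation_swapBlocks [DecidableEq H] [DecidableEq K] [DecidableEq H']
    [DecidableEq K'] {e : X → K} (he : Function.Injective e) (f : A → H)
    {e' : Y → K'} (he' : Function.Injective e') (f' : B → H')
    (σ₀ : Matrix (H × H') (H × H') ℂ) (ω : Matrix (X × Y) (X × Y) ℂ) :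
    qnsCorrelation (swapBlocks e f) (swapBlocks e' f') σ₀ ω =
      ω.trace • σ₀ᵀ.submatrix (Prod.map f f') (Prod.map f f') := by
  classical
  ext ⟨a, b⟩ ⟨a', b'⟩
  simp only [qnsCorrelation_apply, trace_mul_swapBlocks_kronecker_swapBlocks he f he' f']
  simp [trace, Fintype.sum_prod_type, Finset.sum_mul]

end QNSCorrelation

theorem trace_vecMulVec_star_eq_sum_norm_sq {𝕜 X : Type*} [RCLike 𝕜] [Fintype X] (ξ : X → 𝕜) :
    (vecMulVec ξ (star ξ)).trace = ((∑ i, ‖ξ i‖ ^ 2 : ℝ) : 𝕜) := by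
  simp [trace_vecMulVec, dotProduct, RCLike.mul_conj]

theorem statement18_general {X Y A B : Type*} [Fintype X] [Fintype Y] [Fintype A] [Fintype B]
    [DecidableEq X] [DecidableEq Y] (σ : Matrix (A × B) (A × B) ℂ)
    (hσ : σ.PosSemidef ∧ σ.trace = 1) :
    ∃ (dA kA dB kB : ℕ)
      (U : A → X → Matrix (Fin kA) (Fin dA) ℂ)
      (V : B → Y → Matrix (Fin kB) (Fin dB) ℂ)
      (σ₀ : Matrix (Fin dA × Fin dB) (Fin dA × Fin dB) ℂ),
      IsBlockIsometryFam U ∧ IsBlockIsometryFam V ∧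
      σ₀.PosSemidef ∧ σ₀.trace = 1 ∧
      ∀ ω : Matrix (X × Y) (X × Y) ℂ, qnsCorrelation U V σ₀ ω = ω.trace • σ := by
  let e := Fintype.equivFin X
  let e' := Fintype.equivFin Y
  let f := Fintype.equivFin A
  let f' := Fintype.equivFin B
  let g := f.prodCongr f'
  refine ⟨_, _, _, _, swapBlocks e f, swapBlocks e' f', σᵀ.submatrix g.symm g.symm,
    isBlockIsometryFam_swapBlocks e.injective f, isBlockIsometryFam_swapBlocks e'.injective f',
    hσ.1.transpose.submatrix g.symm, ?_, fun ω => ?_⟩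
  · calc (σᵀ.submatrix g.symm g.symm).trace
      _ = σᵀ.trace := g.symm.sum_comp fun p => σᵀ p p
      _ = 1 := by rw [trace_transpose, hσ.2]
  · rw [qnsCorrelation_swapBlocks e.injective f e'.injective f']
    ext ⟨a, b⟩ ⟨a', b'⟩
    simp [g]

/-- Every state on `ℂ^m ⊗ ℂ^n` can be produced from any pure
product state by a QNS correlation of quantum type. -/
theorem statement18
    (m n : ℕ) (hm : 1 ≤ m) (hn : 1 ≤ n)
    (ξ : Fin m → ℂ) (hξ : ∑ i, ‖ξ i‖ ^ 2 = 1)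
    (η : Fin n → ℂ) (hη : ∑ j, ‖η j‖ ^ 2 = 1)
    (σ : Matrix (Fin m × Fin n) (Fin m × Fin n) ℂ)
    (hσ : σ.PosSemidef ∧ σ.trace = 1) :
    ∃ (dA kA dB kB : ℕ)
      (U : Fin m → Fin m → Matrix (Fin kA) (Fin dA) ℂ)
      (V : Fin n → Fin n → Matrix (Fin kB) (Fin dB) ℂ)
      (σ₀ : Matrix (Fin dA × Fin dB) (Fin dA × Fin dB) ℂ),
      IsBlockIsometryFam U ∧ IsBlockIsometryFam V ∧
      σ₀.PosSemidef ∧ σ₀.trace = 1 ∧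
      ∀ (a : Fin m) (b : Fin n) (a' : Fin m) (b' : Fin n),
        (∑ x : Fin m, ∑ x' : Fin m, ∑ y : Fin n, ∑ y' : Fin n,
            ξ x * (starRingEnd ℂ) (ξ x') * η y * (starRingEnd ℂ) (η y') *
              Matrix.trace (σ₀ * (((U a x)ᴴ * U a' x') ⊗ₖ ((V b y)ᴴ * V b' y'))))
          = σ (a, b) (a', b') := by
  obtain ⟨dA, kA, dB, kB, U, V, σ₀, hU, hV, hσ₀, hσ₀_trace, hΓ⟩ :=
    statement18_general (X := Fin m) (Y := Fin n) σ hσ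
  refine ⟨dA, kA, dB, kB, U, V, σ₀, hU, hV, hσ₀, hσ₀_trace, fun a b a' b' => ?_⟩
  rw [← qnsCorrelation_vecMulVec_kronecker_apply, hΓ, trace_kronecker,
    trace_vecMulVec_star_eq_sum_norm_sq, trace_vecMulVec_star_eq_sum_norm_sq, hξ, hη]
  simp
end
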